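/- Let f ≥ 3 be an odd integer and let S = PSL(2, 3^f). Then the only non-principal irreducible complex character of S that has an extension to Aut(S) is the Steinberg character, i.e. the unique irreducible character of S of degree 3^f. -/

import Mathlib

open scoped MatrixGroups

noncomputable section

/-- `χ` is the character of some irreducible complex representation of `G`. -/
def IsIrrChar (G : Type) [Group G] (χ : G → ℂ) : Prop :=
  ∃ V : FDRep ℂ G, CategoryTheory.Simple V ∧ ∀ g : G, FDRep.character V g = χ g

/-- `α : S → ℂ` has an extension to `Aut S`, through the embedding of `S` in `Aut S`
given by inner automorphisms. -/
def ExtendsToAut (S : Type) [Group S] (α : S → ℂ) : Prop :=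
  ∃ ψ : MulAut S → ℂ, IsIrrChar (MulAut S) ψ ∧ ∀ s : S, ψ (MulAut.conj s) = α s

/-- The inertia subgroup `I_G(λ)` of a (character) `lam : M → ℂ` of a normal
subgroup `M` of `G`: the set of `g ∈ G` with `lam ∘ (conjugation by g) = lam`. -/
def inertia {G : Type} [Group G] (M : Subgroup G) (hM : M.Normal) (lam : ↥M → ℂ) :
    Subgroup G where
  carrier := {g : G | ∀ m : ↥M, lam ⟨g * m * g⁻¹, hM.conj_mem m.1 m.2 g⟩ = lam m}
  one_mem' := by
    intro m
    have : ((1 : G) * m * (1 : G)⁻¹) = (m : G) := by group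
    exact congrArg lam (Subtype.ext this)
  mul_mem' := by
    intro a b ha hb m
    have key : ∀ (x y : G) (hx : x ∈ M) (hy : y ∈ M), x = y →
        lam ⟨x, hx⟩ = lam ⟨y, hy⟩ := by
      rintro x y hx hy rfl; rfl
    have h1 := ha ⟨b * m * b⁻¹, hM.conj_mem m.1 m.2 b⟩
    have h2 := hb m
    calc lam ⟨(a * b) * m * (a * b)⁻¹, hM.conj_mem m.1 m.2 (a * b)⟩
        = lam ⟨a * (b * m * b⁻¹) * a⁻¹, hM.conj_mem _ (hM.conj_mem m.1 m.2 b) a⟩ :=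
          key _ _ _ _ (by group)
      _ = lam ⟨b * m * b⁻¹, hM.conj_mem m.1 m.2 b⟩ := h1
      _ = lam m := h2
  inv_mem' := by
    intro a ha m
    have key : ∀ (x y : G) (hx : x ∈ M) (hy : y ∈ M), x = y →
        lam ⟨x, hx⟩ = lam ⟨y, hy⟩ := by
      rintro x y hx hy rfl; rfl
    have h := ha ⟨a⁻¹ * m * (a⁻¹)⁻¹, hM.conj_mem _ m.2 a⁻¹⟩
    have h2 : lam ⟨a * (a⁻¹ * m * (a⁻¹)⁻¹) * a⁻¹,
        hM.conj_mem _ (hM.conj_mem m.1 m.2 a⁻¹) a⟩ = lam m :=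
      key _ _ _ _ (by group)
    exact h.symm.trans h2

/-- A (character) `lam : M → ℂ` of a subgroup `M` of `G` has an extension to
the subgroup `H` of `G`: some irreducible character of `H` restricts to `lam`. -/
def ExtendsToSubgroup {G : Type} [Group G] (M H : Subgroup G) (lam : ↥M → ℂ) : Prop :=
  ∃ ψ : ↥H → ℂ, IsIrrChar ↥H ψ ∧
    ∀ (x : G) (hxM : x ∈ M) (hxH : x ∈ H), ψ ⟨x, hxH⟩ = lam ⟨x, hxM⟩


section helperA
open CategoryTheory

lemma irr_ofRep {G : Type} [Group G] [Fintype G] {V : Type} [AddCommGroup V] [Module ℂ V]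
    [FiniteDimensional ℂ V] (ρ : Representation ℂ G V)
    (h : ∑ g : G, ρ.character g * ρ.character g⁻¹ = Nat.card G) : IsIrrChar G ρ.character := by
  refine ⟨FDRep.of ρ, ?_, fun g => rfl⟩
  rw [FDRep.simple_iff_char_is_norm_one]
  exact h

lemma irr_norm {G : Type} [Group G] [Fintype G] {χ : G → ℂ} (h : IsIrrChar G χ) :
    ∑ g : G, χ g * χ g⁻¹ = Nat.card G := by
  obtain ⟨V, hV, hχ⟩ := h
  have := (FDRep.simple_iff_char_is_norm_one V).1 hV
  simpa [hχ] using this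

lemma irr_orth {G : Type} [Group G] [Fintype G] {χ ψ : G → ℂ} (h : IsIrrChar G χ)
    (h' : IsIrrChar G ψ) (hne : χ ≠ ψ) :
    ∑ g : G, χ g * ψ g⁻¹ = 0 := by
  obtain ⟨V, hV, hχ⟩ := h
  obtain ⟨W, hW, hψ⟩ := h'
  have := invertibleOfNonzero (NeZero.ne (Nat.card G : ℂ))
  have key := FDRep.char_orthonormal V W
  rw [if_neg] at key
  · have h0 : (Nat.card G : ℂ)⁻¹ ≠ 0 := inv_ne_zero (NeZero.ne (Nat.card G : ℂ))
    have := (mul_eq_zero.1 key).resolve_left h0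
    simpa [hχ, hψ] using this
  · rintro ⟨i⟩
    apply hne
    ext g
    rw [← hχ, ← hψ, FDRep.char_iso i]

lemma irr_conj {G : Type} [Group G] {χ : G → ℂ} (h : IsIrrChar G χ) (g x : G) :
    χ (x * g * x⁻¹) = χ g := by
  obtain ⟨V, hV, hχ⟩ := h
  rw [← hχ, ← hχ, FDRep.char_conj]

lemma irr_isConj {G : Type} [Group G] {χ : G → ℂ} (h : IsIrrChar G χ) {a b : G} (hab : IsConj a b) :
    χ a = χ b := by
  obtain ⟨c, rfl⟩ := isConj_iff.1 hab
  rw [irr_conj h]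

lemma irr_rep {G : Type} [Group G] {χ : G → ℂ} (h : IsIrrChar G χ) :
    ∃ (V : Type) (_ : AddCommGroup V) (_ : Module ℂ V) (_ : FiniteDimensional ℂ V)
      (ρ : Representation ℂ G V), ∀ g, ρ.character g = χ g := by
  obtain ⟨V, hV, hχ⟩ := h
  exact ⟨V, inferInstance, inferInstance, inferInstance, V.ρ, hχ⟩

lemma irr_comp {G : Type} [Group G] [Fintype G] {χ : G → ℂ} (h : IsIrrChar G χ) (σ : MulAut G) :
    IsIrrChar G (fun g => χ (σ g)) := by
  obtain ⟨V, _, _, _, ρ, hρ⟩ := irr_rep h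
  have key : (Representation.character (ρ.comp (σ : G →* G)) : G → ℂ) = fun g => χ (σ g) := by
    ext g; rw [← hρ]; rfl
  rw [← key]
  apply irr_ofRep
  rw [key, ← irr_norm h]
  refine Fintype.sum_equiv σ.toEquiv _ _ (fun g => ?_)
  simp

lemma irr_one {G : Type} [Group G] [Fintype G] : IsIrrChar G (fun _ => 1) := by
  have key : (Representation.character (Representation.trivial ℂ G ℂ) : G → ℂ) = fun _ => 1 := by
    ext g
    simp [Representation.character, Representation.trivial]
  rw [← key]
  apply irr_ofRep
  rw [key]
  simp

lemma schur_zero {G : Type} [Group G] [Fintype G] {V : Type} [AddCommGroup V] [Module ℂ V]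
    [FiniteDimensional ℂ V] (ρ : Representation ℂ G V) [ρ.IsIrreducible]
    (f : G → ℂ) (hf : ∀ g x, f (x * g * x⁻¹) = f g)
    (h : ∑ g, f g * ρ.character g = 0) : ∑ g, f g • ρ g = 0 := by
  let L : V →ₗ[ℂ] V := ∑ g, f g • ρ g
  have hL : ∀ x, L ∘ₗ ρ x = ρ x ∘ₗ L := by
    intro x
    have h1 : L ∘ₗ ρ x = ∑ g, f g • ρ (g * x) := by
      ext v; simp [L, LinearMap.sum_apply]
    have h2 : ρ x ∘ₗ L = ∑ g, f g • ρ (x * g) := by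
      ext v; simp [L, LinearMap.sum_apply]
    rw [h1, h2]
    refine Fintype.sum_equiv (MulAut.conj x⁻¹).toEquiv _ _ (fun g => ?_)
    have e : (MulAut.conj x⁻¹).toEquiv g = x⁻¹ * g * x⁻¹⁻¹ := rfl
    rw [e, hf]
    congr 2
    group
  let T : Representation.IntertwiningMap ρ ρ := ⟨L, hL⟩
  obtain ⟨c, hc⟩ :=
    (Representation.IsIrreducible.algebraMap_intertwiningMap_bijective_of_isAlgClosed
      (ρ := ρ)).2 T
  have hc' : L = c • (LinearMap.id : V →ₗ[ℂ] V) := by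
    have := congrArg (fun t => t.toLinearMap) hc
    exact this.symm
  have ht : LinearMap.trace ℂ V L = 0 := by
    rw [← h]
    simp [L, Representation.character, map_sum]
  rw [hc'] at ht
  have hd : Module.finrank ℂ V ≠ 0 := by
    intro h0
    have : Subsingleton V := Module.finrank_zero_iff.1 h0
    have h3 := Representation.IsIrreducible.finrank_intertwiningMap_self ρ
    have : Subsingleton (Representation.IntertwiningMap ρ ρ) :=
      ⟨fun a b => by ext v; exact Subsingleton.elim _ _⟩
    rw [Module.finrank_zero_of_subsingleton] at h3
    omega
  have : c = 0 := by
    rw [map_smul, LinearMap.trace_id, smul_eq_mul] at ht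
    exact (mul_eq_zero.1 ht).resolve_right (by exact_mod_cast hd)
  change L = 0
  rw [hc', this, zero_smul]

lemma simple_kill {G : Type} [Group G] [Fintype G] (M : Type) [AddCommGroup M] [Module ℂ M]
    [Module (MonoidAlgebra ℂ G) M] [IsScalarTower ℂ (MonoidAlgebra ℂ G) M]
    [hs : IsSimpleModule (MonoidAlgebra ℂ G) M]
    (f : G → ℂ) (hf : ∀ g x, f (x * g * x⁻¹) = f g)
    (h : ∀ χ, IsIrrChar G χ → ∑ g, f g * χ g = 0) (m : M) :
    (∑ g, MonoidAlgebra.single g (f g) : MonoidAlgebra ℂ G) • m = 0 := by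
  classical
  let ρ : Representation ℂ G M := Representation.ofModule' M
  have hρ : ∀ g m, ρ g m = MonoidAlgebra.single g (1 : ℂ) • m := fun g m => rfl
  have hsm : ∀ g (c : ℂ) (m : M), MonoidAlgebra.single g c • m = c • ρ g m := by
    intro g c m
    rw [hρ, ← smul_assoc, MonoidAlgebra.smul_single, smul_eq_mul, mul_one]
  have hnt : Nontrivial M := IsSimpleModule.nontrivial (MonoidAlgebra ℂ G) M
  have hirr : ρ.IsIrreducible := by
    have : Nontrivial (Subrepresentation ρ) := by
      refine ⟨⊥, ⊤, fun hbt => ?_⟩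
      have := congrArg Subrepresentation.toSubmodule hbt
      exact bot_ne_top (α := Submodule ℂ M) this
    refine ⟨fun W => ?_⟩
    let N : Submodule (MonoidAlgebra ℂ G) M :=
      { W.toSubmodule with
        smul_mem' := by
          intro a x hx
          induction a using MonoidAlgebra.induction_linear with
          | zero => rw [zero_smul]; exact W.toSubmodule.zero_mem
          | add a b ha hb => rw [add_smul]; exact W.toSubmodule.add_mem ha hb
          | single g r =>
            rw [hsm]
            exact W.toSubmodule.smul_mem _ (W.apply_mem_toSubmodule g hx) }
    rcases eq_bot_or_eq_top N with hN | hN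
    · left
      apply Subrepresentation.toSubmodule_injective
      ext x
      have : x ∈ N ↔ x = 0 := by rw [hN]; simp
      exact this
    · right
      apply Subrepresentation.toSubmodule_injective
      ext x
      have : x ∈ N ↔ True := by rw [hN]; simp
      exact this
  have hfin : FiniteDimensional ℂ M := by
    have h1 : Module.Finite (MonoidAlgebra ℂ G) M := inferInstance
    have h2 : Module.Finite ℂ (MonoidAlgebra ℂ G) := inferInstance
    exact Module.Finite.trans (MonoidAlgebra ℂ G) _
  have hch : IsIrrChar G ρ.character := by
    apply irr_ofRep
    have := invertibleOfNonzero (NeZero.ne (Nat.card G : ℂ))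
    have key := Representation.char_orthonormal ρ ρ
    rw [if_pos ⟨Representation.Equiv.refl ρ⟩] at key
    have h0 : (Nat.card G : ℂ) ≠ 0 := (NeZero.ne (Nat.card G : ℂ))
    field_simp at key
    exact key
  have hz0 := schur_zero ρ f hf (h _ hch)
  rw [Finset.sum_smul]
  have := LinearMap.congr_fun hz0 m
  simpa [LinearMap.sum_apply, hsm] using this

/-- Completeness. -/
lemma irr_complete {G : Type} [Group G] [Fintype G] (f : G → ℂ) (hf : ∀ g x, f (x * g * x⁻¹) = f g)
    (h : ∀ χ, IsIrrChar G χ → ∑ g, f g * χ g = 0) : f = 0 := by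
  classical
  have : NeZero (Nat.card G : ℂ) := inferInstance
  let z : MonoidAlgebra ℂ G := ∑ g, MonoidAlgebra.single g (f g)
  suffices hz : z = 0 by
    ext g
    have := congrArg (fun w : MonoidAlgebra ℂ G => w.coeff g) hz
    simpa [z, Finsupp.single_apply] using this
  have hJ : Ring.jacobson (MonoidAlgebra ℂ G) = ⊥ := IsSemisimpleRing.jacobson_eq_bot _
  suffices hz : z ∈ Ring.jacobson (MonoidAlgebra ℂ G) by
    rw [hJ] at hz; simpa using hz
  rw [Ring.jacobson, Module.jacobson, Submodule.mem_sInf]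
  intro I hI
  have hs : IsSimpleModule (MonoidAlgebra ℂ G) (MonoidAlgebra ℂ G ⧸ I) :=
    isSimpleModule_iff_isCoatom.2 hI
  have := simple_kill (MonoidAlgebra ℂ G ⧸ I) f hf h (Submodule.Quotient.mk 1)
  rw [← Submodule.Quotient.mk_smul, Submodule.Quotient.mk_eq_zero] at this
  simpa using this


lemma brauer_two {G : Type} [Group G] [Fintype G] (σ : MulAut G) (k0 : G)
    (hσ : ∀ g : G, IsConj (σ g) g → g = 1 ∨ IsConj g k0)
    (χ₁ χ₂ χ₃ : G → ℂ) (h₁ : IsIrrChar G χ₁) (h₂ : IsIrrChar G χ₂) (h₃ : IsIrrChar G χ₃)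
    (s₁ : ∀ g, χ₁ (σ g) = χ₁ g) (s₂ : ∀ g, χ₂ (σ g) = χ₂ g) (s₃ : ∀ g, χ₃ (σ g) = χ₃ g)
    (h12 : χ₁ ≠ χ₂) (h13 : χ₁ ≠ χ₃) (h23 : χ₂ ≠ χ₃) : False := by
  classical
  let C := ConjClasses G
  let I := {χ : C → ℂ // IsIrrChar G (fun g => χ (ConjClasses.mk g))}
  have hsurj : Function.Surjective (ConjClasses.mk : G → C) := ConjClasses.mk_surjective
  have hfinC : Fintype C := Fintype.ofFinite _
  let v : I → (C → ℂ) := fun i => i.1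
  have hinj : ∀ i j : I, (fun g => i.1 (ConjClasses.mk g)) = (fun g => j.1 (ConjClasses.mk g)) →
      i = j := by
    intro i j h
    apply Subtype.ext
    ext c
    obtain ⟨g, rfl⟩ := hsurj c
    exact congrFun h g
  have hlin : LinearIndependent ℂ v := by
    rw [linearIndependent_iff']
    intro s a hs i hi
    have h1 : ∑ g : G, (∑ j ∈ s, a j • v j) (ConjClasses.mk g) * i.1 (ConjClasses.mk g⁻¹) = 0 := by
      rw [hs]; simp
    simp only [Finset.sum_apply, Pi.smul_apply, smul_eq_mul, Finset.sum_mul] at h1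
    rw [Finset.sum_comm] at h1
    rw [Finset.sum_eq_single_of_mem i hi] at h1
    · simp only [mul_assoc] at h1
      rw [← Finset.mul_sum] at h1
      have h2 := irr_norm i.2
      change a i * ∑ g : G, i.1 (ConjClasses.mk g) * i.1 (ConjClasses.mk g⁻¹) = 0 at h1
      rw [h2] at h1
      exact (mul_eq_zero.1 h1).resolve_right (NeZero.ne (Nat.card G : ℂ))
    · intro j _ hj
      simp only [mul_assoc]
      rw [← Finset.mul_sum]
      have := irr_orth j.2 i.2 (fun h => hj (hinj _ _ h))
      change a j * ∑ g : G, j.1 (ConjClasses.mk g) * i.1 (ConjClasses.mk g⁻¹) = 0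
      rw [this, mul_zero]
  have hspan : ⊤ ≤ Submodule.span ℂ (Set.range v) := by
    by_contra hlt
    obtain ⟨F, hF0, hF⟩ := Submodule.exists_le_ker_of_lt_top _ (lt_top_iff_ne_top.2 (fun h => hlt h.ge))
    apply hF0
    let n : C → ℂ := fun c => ((Finset.univ.filter (fun g : G => ConjClasses.mk g = c)).card : ℂ)
    have hn : ∀ c, n c ≠ 0 := by
      intro c
      obtain ⟨g, rfl⟩ := hsurj c
      simp only [n, Nat.cast_ne_zero]
      exact (Finset.card_pos.2 ⟨g, by simp⟩).ne'
    let a : C → ℂ := fun c => F (Pi.single c 1)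
    have hFa : ∀ w : C → ℂ, F w = ∑ c, w c * a c := by
      intro w
      conv_lhs => rw [pi_eq_sum_univ' w]
      rw [map_sum]
      refine Finset.sum_congr rfl (fun c _ => ?_)
      rw [map_smul, smul_eq_mul]
    have hf := irr_complete (fun g : G => a (ConjClasses.mk g) / n (ConjClasses.mk g)) ?_ ?_
    · apply LinearMap.ext
      intro w
      rw [hFa]
      refine Finset.sum_eq_zero (fun c _ => ?_)
      obtain ⟨g, rfl⟩ := hsurj c
      have := congrFun hf g
      simp only [Pi.zero_apply, div_eq_zero_iff, hn, or_false] at this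
      rw [this, mul_zero]
    · intro g x
      have : ConjClasses.mk (x * g * x⁻¹) = ConjClasses.mk g :=
        ConjClasses.mk_eq_mk_iff_isConj.2 (isConj_iff.2 ⟨x⁻¹, by group⟩)
      simp only [this]
    · intro χ hχ
      let w : C → ℂ := fun c => Quotient.liftOn c χ (fun a b h => irr_isConj hχ h)
      have hw : ∀ g, w (ConjClasses.mk g) = χ g := fun g => rfl
      have hwI : IsIrrChar G (fun g => w (ConjClasses.mk g)) := hχ
      have h0 : F w = 0 := hF (Submodule.subset_span ⟨⟨w, hwI⟩, rfl⟩)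
      rw [hFa] at h0
      rw [← h0, ← Finset.sum_fiberwise Finset.univ (fun g : G => (ConjClasses.mk g : C))]
      refine Finset.sum_congr rfl (fun c _ => ?_)
      have : ∀ g ∈ Finset.univ.filter (fun g : G => ConjClasses.mk g = c),
          a (ConjClasses.mk g) / n (ConjClasses.mk g) * χ g = a c / n c * w c := by
        intro g hg
        rw [Finset.mem_filter] at hg
        rw [← hg.2, hw]
      rw [Finset.sum_congr rfl this, Finset.sum_const, nsmul_eq_mul]
      change n c * _ = _
      field_simp [hn c]
  let b : Module.Basis I ℂ (C → ℂ) := Module.Basis.mk hlin hspan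
  have hb : ∀ i, b i = i.1 := fun i => by simp [b, v]
  have : Finite I := Module.Finite.finite_basis b
  have hfinI : Fintype I := Fintype.ofFinite _
  let τ : C → C := ConjClasses.map (σ : G →* G)
  have hτ : ∀ g, τ (ConjClasses.mk g) = ConjClasses.mk (σ g) := fun g => rfl
  let P : (C → ℂ) →ₗ[ℂ] (C → ℂ) := LinearMap.funLeft ℂ ℂ τ
  let sI : I → I := fun i => ⟨fun c => i.1 (τ c), irr_comp i.2 σ⟩
  have hP : ∀ i, P (b i) = b (sI i) := by
    intro i
    rw [hb, hb]
    ext c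
    simp [P, sI, LinearMap.funLeft_apply]
  have t1 : LinearMap.trace ℂ _ P = ((Finset.univ.filter (fun i => sI i = i)).card : ℂ) := by
    rw [LinearMap.trace_eq_matrix_trace ℂ b]
    simp only [Matrix.trace, Matrix.diag_apply, LinearMap.toMatrix_apply, hP, Module.Basis.repr_self]
    simp only [Finsupp.single_apply]
    exact Finset.sum_boole _ _
  have t2 : LinearMap.trace ℂ _ P = ((Finset.univ.filter (fun c => τ c = c)).card : ℂ) := by
    rw [LinearMap.trace_eq_matrix_trace ℂ (Pi.basisFun ℂ C)]
    simp only [Matrix.trace, Matrix.diag_apply, LinearMap.toMatrix_apply]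
    simp only [P, LinearMap.funLeft_apply, Pi.single_apply, Pi.basisFun_apply, Pi.basisFun_repr]
    exact Finset.sum_boole _ _
  have hcard : (Finset.univ.filter (fun i => sI i = i)).card =
      (Finset.univ.filter (fun c => τ c = c)).card := by
    exact_mod_cast t1.symm.trans t2
  have hle : (Finset.univ.filter (fun c => τ c = c)).card ≤ 2 := by
    refine (Finset.card_le_card (t := {ConjClasses.mk 1, ConjClasses.mk k0}) ?_).trans
      Finset.card_le_two
    intro c hc
    obtain ⟨g, rfl⟩ := hsurj c
    simp only [Finset.mem_filter, Finset.mem_univ, true_and, hτ] at hc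
    rcases hσ g (ConjClasses.mk_eq_mk_iff_isConj.1 hc) with rfl | h
    · simp
    · simp [ConjClasses.mk_eq_mk_iff_isConj.2 h]
  have mk : ∀ χ : G → ℂ, IsIrrChar G χ → (∀ g, χ (σ g) = χ g) →
      ∃ i : I, sI i = i ∧ (fun g => i.1 (ConjClasses.mk g)) = χ := by
    intro χ hχ hs
    refine ⟨⟨fun c => Quotient.liftOn c χ (fun a b h => irr_isConj hχ h), hχ⟩, ?_, rfl⟩
    apply hinj
    ext g
    exact hs g
  obtain ⟨i₁, a₁, e₁⟩ := mk χ₁ h₁ s₁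
  obtain ⟨i₂, a₂, e₂⟩ := mk χ₂ h₂ s₂
  obtain ⟨i₃, a₃, e₃⟩ := mk χ₃ h₃ s₃
  have h3 : 2 < (Finset.univ.filter (fun i => sI i = i)).card := by
    rw [Finset.two_lt_card]
    refine ⟨i₁, by simp [a₁], i₂, by simp [a₂], i₃, by simp [a₃], ?_, ?_, ?_⟩
    · rintro rfl; exact h12 (e₁.symm.trans e₂)
    · rintro rfl; exact h13 (e₁.symm.trans e₃)
    · rintro rfl; exact h23 (e₂.symm.trans e₃)
  omega


/-- permutation representation on functions -/
def permRep (G X : Type) [Group G] [MulAction G X] : Representation ℂ G (X → ℂ) where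
  toFun g := LinearMap.funLeft ℂ ℂ (fun x => g⁻¹ • x)
  map_one' := by ext f x; simp [LinearMap.funLeft_apply]
  map_mul' a b := by
    apply LinearMap.ext; intro f; ext x
    simp [LinearMap.funLeft_apply, mul_smul]

/-- functions with zero sum -/
def sumZero (X : Type) [Fintype X] : Submodule ℂ (X → ℂ) where
  carrier := {f | ∑ x, f x = 0}
  zero_mem' := by simp
  add_mem' := by
    intro a b ha hb
    simp only [Set.mem_ofPred_eq, Pi.add_apply, Finset.sum_add_distrib] at *
    rw [ha, hb, add_zero]
  smul_mem' := by
    intro c a ha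
    simp only [Set.mem_ofPred_eq, Pi.smul_apply, smul_eq_mul, ← Finset.mul_sum] at *
    rw [ha, mul_zero]

lemma sumZero_stable (G X : Type) [Group G] [MulAction G X] [Fintype X] (g : G) (f : X → ℂ)
    (hf : f ∈ sumZero X) : permRep G X g f ∈ sumZero X := by
  change ∑ x, f (g⁻¹ • x) = 0
  change ∑ x, f x = 0 at hf
  rw [← hf]
  exact Fintype.sum_equiv (MulAction.toPerm g⁻¹) _ _ (fun x => rfl)

/-- Steinberg-type representation -/
def stRep (G X : Type) [Group G] [MulAction G X] [Fintype X] :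
    Representation ℂ G (sumZero X) where
  toFun g := (permRep G X g).restrict (sumZero_stable G X g)
  map_one' := by ext f x; simp
  map_mul' a b := by ext f x; simp

open scoped Classical in
lemma stRep_char (G X : Type) [Group G] [MulAction G X] [Fintype X] [Nonempty X] (g : G) :
    (stRep G X).character g =
      ((Finset.univ.filter (fun x : X => g • x = x)).card : ℂ) - 1 := by
  have hp : LinearMap.trace ℂ _ (permRep G X g) =
      ((Finset.univ.filter (fun x : X => g • x = x)).card : ℂ) := by
    rw [LinearMap.trace_eq_matrix_trace ℂ (Pi.basisFun ℂ X)]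
    simp only [Matrix.trace, Matrix.diag_apply, LinearMap.toMatrix_apply]
    simp only [permRep, MonoidHom.coe_mk, OneHom.coe_mk, LinearMap.funLeft_apply, Pi.single_apply,
      Pi.basisFun_apply, Pi.basisFun_repr]
    rw [Finset.sum_boole]
    congr 2
    ext x
    simp only [Finset.mem_filter, Finset.mem_univ, true_and]
    rw [inv_smul_eq_iff, eq_comm]
  let one : Submodule ℂ (X → ℂ) := Submodule.span ℂ {fun _ => 1}
  have h1 : ∀ f ∈ one, permRep G X g f = f := by
    intro f hf
    obtain ⟨c, rfl⟩ := Submodule.mem_span_singleton.1 hf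
    ext x; simp [permRep, LinearMap.funLeft_apply]
  have hst : ∀ f ∈ one, permRep G X g f ∈ one := fun f hf => by rw [h1 f hf]; exact hf
  have hX : (Fintype.card X : ℂ) ≠ 0 := by exact_mod_cast Fintype.card_ne_zero
  have hc : IsCompl (sumZero X) one := by
    constructor
    · rw [Submodule.disjoint_def]
      intro f hf hf1
      obtain ⟨c, rfl⟩ := Submodule.mem_span_singleton.1 hf1
      have : ∑ x : X, (c • (fun _ : X => (1 : ℂ))) x = 0 := hf
      simp [hX] at this
      simp [this]
    · rw [codisjoint_iff, eq_top_iff]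
      intro f _
      rw [Submodule.mem_sup]
      let c : ℂ := (∑ x, f x) / Fintype.card X
      refine ⟨f - c • (fun _ => 1), ?_, c • (fun _ => 1),
        Submodule.smul_mem _ _ (Submodule.mem_span_singleton_self _), by simp⟩
      change ∑ x, (f - c • (fun _ : X => (1 : ℂ)) : X → ℂ) x = 0
      simp [Finset.sum_sub_distrib, c]
      field_simp
      simp
  have hint := LinearMap.trace_eq_sum_trace_restrict (R := ℂ) (M := X → ℂ) (ι := Bool)
    (N := fun b => cond b (sumZero X) one) (f := permRep G X g) ?_ ?_
  · rw [hp] at hint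
    rw [Fintype.sum_bool] at hint
    have hone : LinearMap.trace ℂ one ((permRep G X g).restrict hst) = 1 := by
      have : (permRep G X g).restrict hst = LinearMap.id := by
        ext f : 2
        exact h1 f f.2
      rw [this, LinearMap.trace_id]
      have : Module.finrank ℂ one = 1 := finrank_span_singleton (by
        intro h
        obtain ⟨x⟩ := ‹Nonempty X›
        exact one_ne_zero (congrFun h x))
      rw [this, Nat.cast_one]
    have e : (stRep G X).character g + 1 =
      ((Finset.univ.filter (fun x : X => g • x = x)).card : ℂ) := by
      rw [hint, ← hone]; rfl
    rw [← e]; ring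
  · rw [DirectSum.isInternal_submodule_iff_isCompl _ (i := true) (j := false) (by simp)
      (by ext b; cases b <;> simp)]
    exact hc
  · intro b
    cases b
    · exact hst
    · exact sumZero_stable G X g

open scoped Classical in
lemma sum_fix (G X : Type) [Group G] [MulAction G X] [Fintype X] [Fintype G] (x0 : X)
    (ht : ∀ x : X, ∃ g : G, g • x0 = x) :
    ∑ g : G, (Finset.univ.filter (fun x : X => g • x = x)).card = Fintype.card G := by
  have h := MulAction.sum_card_fixedBy_eq_card_orbits_mul_card_group G X
  have ho : Fintype.card (Quotient (MulAction.orbitRel G X)) = 1 := by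
    rw [Fintype.card_eq_one_iff]
    refine ⟨Quotient.mk _ x0, fun y => ?_⟩
    induction y using Quotient.inductionOn with
    | h x => exact Quotient.sound (ht x)
  rw [ho, one_mul] at h
  rw [← h]
  refine Finset.sum_congr rfl (fun g _ => ?_)
  rw [Fintype.card_subtype]
  rfl

open scoped Classical in
lemma sum_fix_sq (G X : Type) [Group G] [MulAction G X] [Fintype X] [Fintype G] (x0 x1 : X)
    (hne : x1 ≠ x0)
    (ht : ∀ x : X, ∃ g : G, g • x0 = x)
    (h2 : ∀ x y : X, x ≠ y → ∃ g : G, g • x0 = x ∧ g • x1 = y) :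
    ∑ g : G, (Finset.univ.filter (fun x : X => g • x = x)).card ^ 2 = 2 * Fintype.card G := by
  have h := MulAction.sum_card_fixedBy_eq_card_orbits_mul_card_group G (X × X)
  have ho : Fintype.card (Quotient (MulAction.orbitRel G (X × X))) = 2 := by
    rw [← Nat.card_eq_fintype_card, Nat.card_eq_two_iff]
    refine ⟨Quotient.mk _ (x0, x0), Quotient.mk _ (x0, x1), ?_, ?_⟩
    · intro h
      obtain ⟨g, hg⟩ := Quotient.exact h
      have h1 := congrArg Prod.fst hg
      have h2 := congrArg Prod.snd hg
      simp only [Prod.smul_mk] at h1 h2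
      exact hne ((MulAction.injective g (h2.trans h1.symm)))
    · rw [Set.eq_univ_iff_forall]
      intro y
      induction y using Quotient.inductionOn with
      | h x =>
        obtain ⟨x, y⟩ := x
        by_cases hxy : x = y
        · subst hxy
          left
          obtain ⟨g, hg⟩ := ht x
          exact Quotient.sound ⟨g, by simp [hg]⟩
        · right
          obtain ⟨g, hg, hg'⟩ := h2 x y hxy
          exact Quotient.sound ⟨g, by simp [hg, hg']⟩
  rw [ho] at h
  rw [← h]
  refine Finset.sum_congr rfl (fun g _ => ?_)
  rw [Fintype.card_subtype, sq, ← Finset.card_product]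
  congr 1
  ext ⟨x, y⟩
  simp [MulAction.mem_fixedBy]

open scoped Classical in
lemma st_irr (G X : Type) [Group G] [MulAction G X] [Fintype X] [Finite G] (x0 x1 : X)
    (hne : x1 ≠ x0)
    (ht : ∀ x : X, ∃ g : G, g • x0 = x)
    (h2 : ∀ x y : X, x ≠ y → ∃ g : G, g • x0 = x ∧ g • x1 = y) :
    IsIrrChar G (fun g => ((Finset.univ.filter (fun x : X => g • x = x)).card : ℂ) - 1) := by
  have : Fintype G := Fintype.ofFinite G
  have : Nonempty X := ⟨x0⟩
  have hc : (stRep G X).character =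
      (fun g => ((Finset.univ.filter (fun x : X => g • x = x)).card : ℂ) - 1) := by
    ext g; exact stRep_char G X g
  rw [← hc]
  apply irr_ofRep
  rw [hc]
  have e1 := sum_fix G X x0 ht
  have e2 := sum_fix_sq G X x0 x1 hne ht h2
  have e1' : ∑ g : G, ((Finset.univ.filter (fun x : X => g • x = x)).card : ℂ) = Fintype.card G := by
    exact_mod_cast e1
  have e2' : ∑ g : G, ((Finset.univ.filter (fun x : X => g • x = x)).card : ℂ) ^ 2
      = 2 * Fintype.card G := by
    exact_mod_cast e2
  have hinv : ∀ g : G, (Finset.univ.filter (fun x : X => g⁻¹ • x = x)) =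
      (Finset.univ.filter (fun x : X => g • x = x)) := by
    intro g; ext x
    simp only [Finset.mem_filter, Finset.mem_univ, true_and]
    rw [inv_smul_eq_iff, eq_comm]
  calc _ = ∑ g : G, (((Finset.univ.filter (fun x : X => g • x = x)).card : ℂ) ^ 2
          - 2 * ((Finset.univ.filter (fun x : X => g • x = x)).card : ℂ) + 1) := by
        refine Finset.sum_congr rfl (fun g _ => ?_)
        simp only [hinv]
        ring
    _ = _ := by
        rw [Finset.sum_add_distrib, Finset.sum_sub_distrib, ← Finset.mul_sum, e1', e2']
        simp


set_option linter.unusedSimpArgs false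
set_option linter.unusedVariables false

open scoped MatrixGroups

variable {K : Type} [Field K]

/-- upper unipotent -/
def mU (x : K) : SL(2, K) := ⟨!![1, x; 0, 1], by simp [Matrix.det_fin_two]⟩
/-- lower unipotent -/
def mL (x : K) : SL(2, K) := ⟨!![1, 0; x, 1], by simp [Matrix.det_fin_two]⟩
/-- diagonal -/
def mT (a : Kˣ) : SL(2, K) := ⟨!![(a : K), 0; 0, ((a⁻¹ : Kˣ) : K)], by simp [Matrix.det_fin_two]⟩
/-- Weyl element -/
def mW : SL(2, K) := ⟨!![0, 1; -1, 0], by simp [Matrix.det_fin_two]⟩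

lemma sl_ext {A B : SL(2, K)} (h00 : A.1 0 0 = B.1 0 0) (h01 : A.1 0 1 = B.1 0 1)
    (h10 : A.1 1 0 = B.1 1 0) (h11 : A.1 1 1 = B.1 1 1) : A = B := by
  apply Subtype.ext
  ext i j
  fin_cases i <;> fin_cases j <;> assumption

lemma sl_det (A : SL(2, K)) : A.1 0 0 * A.1 1 1 - A.1 0 1 * A.1 1 0 = 1 := by
  have := A.2
  rwa [Matrix.det_fin_two] at this

lemma slmul (A B : SL(2, K)) (i j : Fin 2) :
    (A * B).1 i j = A.1 i 0 * B.1 0 j + A.1 i 1 * B.1 1 j := by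
  change (A.1 * B.1) i j = _
  rw [Matrix.mul_apply, Fin.sum_univ_two]

lemma mU_00 (x : K) : (mU x).1 0 0 = 1 := rfl
lemma mU_01 (x : K) : (mU x).1 0 1 = x := rfl
lemma mU_10 (x : K) : (mU x).1 1 0 = 0 := rfl
lemma mU_11 (x : K) : (mU x).1 1 1 = 1 := rfl
lemma mL_00 (x : K) : (mL x).1 0 0 = 1 := rfl
lemma mL_01 (x : K) : (mL x).1 0 1 = 0 := rfl
lemma mL_10 (x : K) : (mL x).1 1 0 = x := rfl
lemma mL_11 (x : K) : (mL x).1 1 1 = 1 := rfl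
lemma mT_00 (x : Kˣ) : (mT x).1 0 0 = x := rfl
lemma mT_01 (x : Kˣ) : (mT x).1 0 1 = 0 := rfl
lemma mT_10 (x : Kˣ) : (mT x).1 1 0 = 0 := rfl
lemma mT_11 (x : Kˣ) : (mT x).1 1 1 = ((x⁻¹ : Kˣ) : K) := rfl
lemma mW_00 : (mW : SL(2, K)).1 0 0 = 0 := rfl
lemma mW_01 : (mW : SL(2, K)).1 0 1 = 1 := rfl
lemma mW_10 : (mW : SL(2, K)).1 1 0 = -1 := rfl
lemma mW_11 : (mW : SL(2, K)).1 1 1 = 0 := rfl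
lemma sl1_00 : (1 : SL(2, K)).1 0 0 = 1 := rfl
lemma sl1_01 : (1 : SL(2, K)).1 0 1 = 0 := rfl
lemma sl1_10 : (1 : SL(2, K)).1 1 0 = 0 := rfl
lemma sl1_11 : (1 : SL(2, K)).1 1 1 = 1 := rfl
lemma slneg (A : SL(2, K)) (i j : Fin 2) : (-A).1 i j = - A.1 i j := rfl
lemma slinv_00 (A : SL(2, K)) : (A⁻¹).1 0 0 = A.1 1 1 := by
  have := Matrix.SpecialLinearGroup.coe_inv A; rw [this, Matrix.adjugate_fin_two]; rfl
lemma slinv_01 (A : SL(2, K)) : (A⁻¹).1 0 1 = - A.1 0 1 := by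
  have := Matrix.SpecialLinearGroup.coe_inv A; rw [this, Matrix.adjugate_fin_two]; rfl
lemma slinv_10 (A : SL(2, K)) : (A⁻¹).1 1 0 = - A.1 1 0 := by
  have := Matrix.SpecialLinearGroup.coe_inv A; rw [this, Matrix.adjugate_fin_two]; rfl
lemma slinv_11 (A : SL(2, K)) : (A⁻¹).1 1 1 = A.1 0 0 := by
  have := Matrix.SpecialLinearGroup.coe_inv A; rw [this, Matrix.adjugate_fin_two]; rfl

/-- hom to upper unipotents -/
def jU : Multiplicative K →* SL(2, K) where
  toFun x := mU x.toAdd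
  map_one' := by apply sl_ext <;> simp [mU_00, mU_01, mU_10, mU_11, sl1_00, sl1_01, sl1_10, sl1_11]
  map_mul' a b := by
    apply sl_ext <;> simp [slmul, mU_00, mU_01, mU_10, mU_11, add_comm]

/-- hom to lower unipotents -/
def jL : Multiplicative K →* SL(2, K) where
  toFun x := mL x.toAdd
  map_one' := by apply sl_ext <;> simp [mL_00, mL_01, mL_10, mL_11, sl1_00, sl1_01, sl1_10, sl1_11]
  map_mul' a b := by
    apply sl_ext <;> simp [slmul, mL_00, mL_01, mL_10, mL_11, add_comm]

/-- hom to diagonal -/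
def jT : Kˣ →* SL(2, K) where
  toFun x := mT x
  map_one' := by apply sl_ext <;> simp [mT_00, mT_01, mT_10, mT_11, sl1_00, sl1_01, sl1_10, sl1_11]
  map_mul' a b := by
    apply sl_ext <;> simp [slmul, mT_00, mT_01, mT_10, mT_11, mul_comm]

/-- Borel -/
def bor : Subgroup SL(2, K) where
  carrier := {g | g.1 1 0 = 0}
  one_mem' := rfl
  mul_mem' := by
    intro a b ha hb
    simp only [Set.mem_ofPred_eq] at *
    rw [slmul, ha, hb]; ring
  inv_mem' := by
    intro a ha
    simp only [Set.mem_ofPred_eq] at *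
    rw [slinv_10, ha, neg_zero]

/-- monomial -/
def mon (A : Subgroup Kˣ) (hA : -1 ∈ A) : Subgroup SL(2, K) where
  carrier := {g | ∃ a ∈ A, g = mT a ∨ g = mT a * mW}
  one_mem' := ⟨1, A.one_mem, Or.inl (map_one jT).symm⟩
  mul_mem' := by
    have hm : ∀ a b : Kˣ, mT (a * b) = mT a * mT b := map_mul jT
    have hw : ∀ a : Kˣ, (mW : SL(2, K)) * mT a = mT a⁻¹ * mW := by
      intro a
      apply sl_ext <;> simp [slmul, mT_00, mT_01, mT_10, mT_11, mW_00, mW_01, mW_10, mW_11]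
    have hww : (mW : SL(2, K)) * mW = mT (-1) := by
      apply sl_ext <;> simp [slmul, mT_00, mT_01, mT_10, mT_11, mW_00, mW_01, mW_10, mW_11]
    rintro g h ⟨a, ha, rfl | rfl⟩ ⟨b, hb, rfl | rfl⟩
    · exact ⟨a * b, A.mul_mem ha hb, Or.inl (hm _ _).symm⟩
    · exact ⟨a * b, A.mul_mem ha hb, Or.inr (by rw [hm, mul_assoc])⟩
    · exact ⟨a * b⁻¹, A.mul_mem ha (A.inv_mem hb), Or.inr (by
        rw [hm, mul_assoc, hw, mul_assoc])⟩
    · refine ⟨a * b⁻¹ * -1, A.mul_mem (A.mul_mem ha (A.inv_mem hb)) hA, Or.inl ?_⟩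
      rw [hm, hm, ← hww, mul_assoc, ← mul_assoc mW (mT b) mW, hw]
      simp only [mul_assoc]
  inv_mem' := by
    rintro g ⟨a, ha, rfl | rfl⟩
    · exact ⟨a⁻¹, A.inv_mem ha, Or.inl (map_inv jT a).symm⟩
    · refine ⟨-a, ?_, Or.inr ?_⟩
      · have := A.mul_mem hA ha; simpa using this
      · rw [inv_eq_iff_mul_eq_one]
        apply sl_ext <;> simp [slmul, mT_00, mT_01, mT_10, mT_11, mW_00, mW_01, mW_10, mW_11, sl1_00, sl1_01, sl1_10, sl1_11]

lemma sum_hom {G H V : Type} [Group G] [Group H] [Fintype H] [AddCommGroup V] [Module ℂ V]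
    [FiniteDimensional ℂ V] (ρ : Representation ℂ G V) (j : H →* G) :
    ∑ h : H, ρ.character (j h) =
      Fintype.card H * (Module.finrank ℂ (Representation.invariants (ρ.comp j)) : ℂ) := by
  have := invertibleOfNonzero (NeZero.ne (Nat.card H : ℂ))
  have h := Representation.card_inv_mul_sum_char_eq_finrank (ρ.comp j : Representation ℂ H V)
  have h0 : (Nat.card H : ℂ) ≠ 0 := (NeZero.ne (Nat.card H : ℂ))
  rw [inv_mul_eq_iff_eq_mul₀ h0] at h
  rw [← Nat.card_eq_fintype_card, ← h]
  rfl

lemma mem_bor {g : SL(2, K)} : g ∈ bor ↔ g.1 1 0 = 0 := Iff.rfl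

lemma sum_bor [Fintype K] [DecidableEq K] [Fintype (bor : Subgroup SL(2, K))] (X : SL(2, K) → ℂ) :
    ∑ g : (bor : Subgroup SL(2, K)), X g = ∑ a : Kˣ, ∑ x : K, X (mT a * mU x) := by
  rw [← Fintype.sum_prod_type']
  symm
  have hmem : ∀ p : Kˣ × K, mT p.1 * mU p.2 ∈ (bor : Subgroup SL(2, K)) := by
    intro p
    rw [mem_bor]
    simp [slmul, mT_00, mT_01, mT_10, mT_11, mU_00, mU_01, mU_10, mU_11]
  refine Fintype.sum_bijective (fun p : Kˣ × K => (⟨mT p.1 * mU p.2, hmem p⟩ : bor)) ⟨?_, ?_⟩ _ _ ?_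
  · rintro ⟨a, x⟩ ⟨b, y⟩ h
    have h1 : mT a * mU x = mT b * mU y := congrArg Subtype.val h
    have h00 := congrArg (fun g : SL(2, K) => g.1 0 0) h1
    have h01 := congrArg (fun g : SL(2, K) => g.1 0 1) h1
    simp [slmul, mT_00, mT_01, mT_10, mT_11, mU_00, mU_01, mU_10, mU_11] at h00 h01
    obtain rfl := Units.ext h00
    simpa using h01
  · rintro ⟨g, hg⟩
    rw [mem_bor] at hg
    have hd := sl_det g
    rw [hg, mul_zero, sub_zero] at hd
    have h0 : g.1 0 0 ≠ 0 := left_ne_zero_of_mul_eq_one hd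
    refine ⟨(Units.mk0 (g.1 0 0) h0, (g.1 0 0)⁻¹ * g.1 0 1), Subtype.ext ?_⟩
    apply sl_ext <;> simp [slmul, mT_00, mT_01, mT_10, mT_11, mU_00, mU_01, mU_10, mU_11, hg, h0]
    exact (eq_inv_of_mul_eq_one_right hd).symm
  · intro p; rfl

lemma sum_mon [Fintype K] [DecidableEq K] (A : Subgroup Kˣ) (hA : -1 ∈ A) [Fintype A] [Fintype (mon A hA)] (X : SL(2, K) → ℂ) :
    ∑ g : mon A hA, X g = ∑ a : A, X (mT a) + ∑ a : A, X (mT a * mW) := by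
  refine Eq.trans ?_ (Fintype.sum_sum_type (fun s : A ⊕ A => X (s.elim (fun a : A => mT (a : Kˣ)) (fun a : A => mT (a : Kˣ) * mW))))
  symm
  have hmem : ∀ s : A ⊕ A, (s.elim (fun a : A => mT (a : Kˣ)) (fun a : A => mT (a : Kˣ) * mW) : SL(2, K)) ∈ mon A hA := by
    rintro (a | a)
    · exact ⟨a, a.2, Or.inl rfl⟩
    · exact ⟨a, a.2, Or.inr rfl⟩
  refine Fintype.sum_bijective (fun s : A ⊕ A => (⟨_, hmem s⟩ : mon A hA)) ⟨?_, ?_⟩ _ _ ?_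
  · rintro (⟨a, ha⟩ | ⟨a, ha⟩) (⟨b, hb⟩ | ⟨b, hb⟩) h
    all_goals
      have h1 := congrArg Subtype.val h
      have h00 := congrArg (fun g : SL(2, K) => g.1 0 0) h1
      have h01 := congrArg (fun g : SL(2, K) => g.1 0 1) h1
      simp [slmul, mT_00, mT_01, mT_10, mT_11, mW_00, mW_01, mW_10, mW_11] at h00 h01
    · obtain rfl := Units.ext h00; rfl
    · obtain rfl := Units.ext h01; rfl
  · rintro ⟨g, a, ha, rfl | rfl⟩
    · exact ⟨Sum.inl ⟨a, ha⟩, rfl⟩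
    · exact ⟨Sum.inr ⟨a, ha⟩, rfl⟩
  · intro p; rfl

lemma card_bor [Fintype K] [DecidableEq K] [Fintype (bor : Subgroup SL(2, K))] :
    (Fintype.card (bor : Subgroup SL(2, K)) : ℂ) = (Fintype.card Kˣ : ℂ) * Fintype.card K := by
  have := sum_bor (K := K) (fun _ => 1)
  simpa using this

lemma card_mon [Fintype K] [DecidableEq K] (A : Subgroup Kˣ) (hA : -1 ∈ A) [Fintype A] [Fintype (mon A hA)] :
    (Fintype.card (mon A hA) : ℂ) = 2 * (Fintype.card A : ℂ) := by
  have := sum_mon A hA (fun _ => 1)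
  simp at this
  rw [this]; ring


/-- matrix from entries -/
def slmk (a b c d : K) (h : a * d - b * c = 1) : SL(2, K) :=
  ⟨!![a, b; c, d], by rw [Matrix.det_fin_two_of, h]⟩
lemma slmk_00 (a b c d : K) (h) : (slmk a b c d h).1 0 0 = a := rfl
lemma slmk_01 (a b c d : K) (h) : (slmk a b c d h).1 0 1 = b := rfl
lemma slmk_10 (a b c d : K) (h) : (slmk a b c d h).1 1 0 = c := rfl
lemma slmk_11 (a b c d : K) (h) : (slmk a b c d h).1 1 1 = d := rfl

lemma sq_or [Finite K] (hns : ∀ x : K, x ^ 2 ≠ -1) (x : K) (hx : x ≠ 0) :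
    ∃ s : K, s ≠ 0 ∧ (x = s ^ 2 ∨ x = - s ^ 2) := by
  classical
  have := Fintype.ofFinite K
  have h1 : quadraticChar K (-1) = -1 := by
    rw [quadraticChar_neg_one_iff_not_isSquare]
    rintro ⟨r, hr⟩
    exact hns r (by rw [hr]; ring)
  have h2 : quadraticChar K (-x) = - quadraticChar K x := by
    rw [neg_eq_neg_one_mul, map_mul, h1]; ring
  rcases quadraticChar_dichotomy hx with h | h
  · obtain ⟨s, hs⟩ := (quadraticChar_one_iff_isSquare hx).1 h
    refine ⟨s, ?_, Or.inl (by rw [hs]; ring)⟩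
    rintro rfl; apply hx; simpa using hs
  · rw [h, neg_neg] at h2
    obtain ⟨s, hs⟩ := (quadraticChar_one_iff_isSquare (neg_ne_zero.2 hx)).1 h2
    refine ⟨s, ?_, Or.inr (by rw [sq, ← hs, neg_neg])⟩
    rintro rfl; apply hx; simpa using hs

lemma tr_zero [Finite K] (hns : ∀ x : K, x ^ 2 ≠ -1) (A : SL(2, K)) (ht : A.1 0 0 + A.1 1 1 = 0) :
    ∃ P : SL(2, K), P * mW * P⁻¹ = A ∨ P * mW * P⁻¹ = -A := by
  have hd := sl_det A
  have hdd : A.1 1 1 = - A.1 0 0 := by linear_combination ht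
  rw [hdd] at hd
  have hc : A.1 1 0 ≠ 0 := by
    intro h
    rw [h] at hd
    exact hns (A.1 0 0) (by linear_combination -hd)
  obtain ⟨s, hs, h⟩ := sq_or hns _ hc
  have hss : s * s⁻¹ = 1 := mul_inv_cancel₀ hs
  rcases h with h | h
  · rw [h] at hd
    refine ⟨slmk s⁻¹ (A.1 0 0 * s⁻¹) 0 (A.1 1 0 * s⁻¹) ?_, Or.inr ?_⟩
    · rw [h]; field_simp; ring
    · rw [mul_inv_eq_iff_eq_mul]
      apply sl_ext <;> simp only [slmul, slneg, slmk_00, slmk_01, slmk_10, slmk_11, mW_00, mW_01, mW_10, mW_11, hdd, h] <;> field_simp <;> first | linear_combination hd | linear_combination -hd | linear_combination 2 * hd | linear_combination -2 * hd | ring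
  · rw [h] at hd
    refine ⟨slmk s⁻¹ (-A.1 0 0 * s⁻¹) 0 (-A.1 1 0 * s⁻¹) ?_, Or.inl ?_⟩
    · rw [h]; field_simp; ring
    · rw [mul_inv_eq_iff_eq_mul]
      apply sl_ext <;> simp only [slmul, slneg, slmk_00, slmk_01, slmk_10, slmk_11, mW_00, mW_01, mW_10, mW_11, hdd, h] <;> field_simp <;> first | linear_combination hd | linear_combination -hd | linear_combination 2 * hd | linear_combination -2 * hd | ring

lemma arith_key (q d a b c n e : ℕ) (r w : ℂ) (hq : 3 < q) (hodd : q % 2 = 1)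
    (E1 : 2 * (q : ℂ) * d = 2 * q + (q - 1) * r) (E2 : 3 * (a : ℂ) = q + r) (E3 : 2 * d ≤ q)
    (E4 : (q : ℂ) * (q - 1) * b = 2 * q * d + q * ((q - 1) * c - 2 * q))
    (E5 : 2 * ((q : ℂ) - 1) * n = (q - 1) * c + (q - 1) * w)
    (E6 : 4 * (e : ℂ) = 2 * q + 2 * w) : b ≠ 0 := by
  have hr : r = 3 * (a : ℂ) - q := by linear_combination -E2
  have hw : w = 2 * (e : ℂ) - q := by linear_combination -(1/2) * E6
  subst hr hw
  have F1 : 2 * (q : ℤ) * d = 2 * q + (q - 1) * (3 * a - q) := by exact_mod_cast E1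
  have F4 : (q : ℤ) * (q - 1) * b = 2 * q * d + q * ((q - 1) * c - 2 * q) := by exact_mod_cast E4
  have F5 : 2 * ((q : ℤ) - 1) * n = (q - 1) * c + (q - 1) * (2 * e - q) := by exact_mod_cast E5
  have hq1 : (q : ℤ) - 1 ≠ 0 := by omega
  have hq0 : (q : ℤ) ≠ 0 := by omega
  have G5 : 2 * (n : ℤ) = c + (2 * e - q) := by
    apply mul_left_cancel₀ hq1; linear_combination F5
  have hdiv : ((q : ℤ) - 1) ∣ 2 * (d - 1) :=
    ⟨3 * a - q - 2 * (d - 1), by linear_combination F1⟩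
  have hd : d = 1 := by
    rcases Nat.eq_zero_or_pos d with h | h
    · subst h
      have : ((q : ℤ) - 1) ∣ 2 := by
        have h2 := (dvd_neg).2 hdiv
        simpa using h2
      have := Int.le_of_dvd (by norm_num) this
      omega
    · have := Int.eq_zero_of_abs_lt_dvd hdiv (by rw [abs_of_nonneg] <;> omega)
      omega
  subst hd
  have G4 : (b : ℤ) = c - 2 := by
    apply mul_left_cancel₀ (mul_ne_zero hq0 hq1); push_cast at F4; linear_combination F4
  omega

lemma mT_conj_mU (s : K) (hs : s ≠ 0) (x : K) :
    mT (Units.mk0 s hs) * mU x * (mT (Units.mk0 s hs))⁻¹ = mU (s ^ 2 * x) := by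
  rw [mul_inv_eq_iff_eq_mul]
  apply sl_ext <;> simp [slmul, mT_00, mT_01, mT_10, mT_11, mU_00, mU_01, mU_10, mU_11]
  field_simp

lemma mU_zero : mU (0 : K) = 1 := map_one jU

lemma mT_neg_one : mT (-1 : Kˣ) = -1 := by
  apply sl_ext <;> simp [slneg, mT_00, mT_01, mT_10, mT_11, sl1_00, sl1_01, sl1_10, sl1_11]

lemma mL_conj (x : K) : mW * mU (-x) * mW⁻¹ = mL x := by
  rw [mul_inv_eq_iff_eq_mul]
  apply sl_ext <;> simp [slmul, mW_00, mW_01, mW_10, mW_11, mU_00, mU_01, mU_10, mU_11, mL_00, mL_01, mL_10, mL_11]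

lemma sl_gen0 (g : SL(2, K)) (h : g.1 1 0 ≠ 0) :
    g = mU ((g.1 0 0 - 1) / g.1 1 0) * mL (g.1 1 0) * mU ((g.1 1 1 - 1) / g.1 1 0) := by
  have hd := sl_det g
  apply sl_ext <;> simp only [slmul, mU_00, mU_01, mU_10, mU_11, mL_00, mL_01, mL_10, mL_11] <;>
    field_simp <;> first | ring1 | linear_combination -hd

lemma sl_gen {H : Subgroup SL(2, K)} (hU : ∀ x, mU x ∈ H) (hL : ∀ x, mL x ∈ H) (g : SL(2, K)) :
    g ∈ H := by
  by_cases h : g.1 1 0 = 0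
  · have hd := sl_det g
    rw [h, mul_zero, sub_zero] at hd
    have h1 : (g * mL 1).1 1 0 ≠ 0 := by
      simp only [slmul, mL_00, mL_10, h]
      simpa using right_ne_zero_of_mul_eq_one hd
    have h2 : g * mL 1 ∈ H := by
      rw [sl_gen0 _ h1]
      exact H.mul_mem (H.mul_mem (hU _) (hL _)) (hU _)
    exact (H.mul_mem_cancel_right (hL 1)).1 h2
  · rw [sl_gen0 g h]
    exact H.mul_mem (H.mul_mem (hU _) (hL _)) (hU _)

lemma mTU_conj (a : Kˣ) (h1 : a ≠ 1) (h2 : a ≠ -1) (x : K) :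
    ∃ y, mU y * mT a * (mU y)⁻¹ = mT a * mU x := by
  have ha : (a : K) ≠ 0 := a.ne_zero
  have h : (1 : K) - a ^ 2 ≠ 0 := by
    intro h
    have h' : ((a : K) - 1) * (a + 1) = 0 := by linear_combination -h
    rcases mul_eq_zero.1 h' with h' | h'
    · exact h1 (Units.ext (by simpa using sub_eq_zero.1 h'))
    · exact h2 (Units.ext (by simpa using eq_neg_of_add_eq_zero_left h'))
  refine ⟨a ^ 2 * x / (1 - a ^ 2), ?_⟩
  rw [mul_inv_eq_iff_eq_mul]
  apply sl_ext <;> simp [slmul, mT_00, mT_01, mT_10, mT_11, mU_00, mU_01, mU_10, mU_11]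
  field_simp
  ring

open scoped Classical in
lemma borel_ne [Fintype K] [CharP K 3] (hq : 3 < Fintype.card K) (hodd : Fintype.card K % 2 = 1)
    (hns : ∀ x : K, x ^ 2 ≠ -1)
    {V : Type} [AddCommGroup V] [Module ℂ V] [FiniteDimensional ℂ V]
    (ρ : Representation ℂ SL(2, K) V) (hneg : ∀ g, ρ.character (-g) = ρ.character g)
    (h1 : ρ.character 1 = Fintype.card K) (hinv : Module.finrank ℂ ρ.invariants = 0) :
    ∑ a : Kˣ, ∑ x : K, ρ.character (mT a * mU x) ≠ 0 := by
  set X := ρ.character with hX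
  set q := Fintype.card K with hqdef
  have hconj : ∀ g x, X (x * g * x⁻¹) = X g := fun g x => ρ.char_conj g x
  set d := Module.finrank ℂ (Representation.invariants (ρ.comp jU)) with hd
  have hcU : Fintype.card (Multiplicative K) = q := Fintype.card_congr Multiplicative.toAdd
  have hcT : (Fintype.card Kˣ : ℂ) = (q : ℂ) - 1 := by
    rw [Fintype.card_units]; rw [← hqdef, Nat.cast_sub (show 1 ≤ q by omega), Nat.cast_one]
  have sU : ∑ x : K, X (mU x) = q * d := by
    have := sum_hom ρ jU
    rw [hcU] at this
    rw [← this]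
    exact Fintype.sum_equiv Multiplicative.ofAdd _ _ (fun x => rfl)
  have sL : ∑ x : K, X (mL x) = q * (Module.finrank ℂ (Representation.invariants (ρ.comp jL)) : ℂ) := by
    have := sum_hom ρ jL
    rw [hcU] at this
    rw [← this]
    exact Fintype.sum_equiv Multiplicative.ofAdd _ _ (fun x => rfl)
  have sUn : ∑ x : K, X (mU (-x)) = q * d := by
    rw [← sU]
    exact Fintype.sum_equiv (Equiv.neg K) _ _ (fun x => rfl)
  have hq0 : (q : ℂ) ≠ 0 := by
    have : q ≠ 0 := by omega
    exact_mod_cast this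
  have hdL : Module.finrank ℂ (Representation.invariants (ρ.comp jL)) = d := by
    have h : ∑ x : K, X (mL x) = q * d := by
      rw [← sUn]
      refine Finset.sum_congr rfl fun x _ => ?_
      rw [← mL_conj, hconj]
    rw [sL] at h
    exact_mod_cast mul_left_cancel₀ hq0 h
  -- E1
  have E1 : 2 * (q : ℂ) * d = 2 * q + (q - 1) * (X (mU 1) + X (mU (-1))) := by
    have h : ∀ x : K, X (mU x) + X (mU (-x)) =
        (X (mU 1) + X (mU (-1))) + if x = 0 then 2 * (q : ℂ) - (X (mU 1) + X (mU (-1))) else 0 := by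
      intro x
      split_ifs with hx
      · rw [hx, neg_zero, mU_zero, h1]; ring
      · obtain ⟨s, hs, h | h⟩ := sq_or hns x hx
        · have a1 : X (mU x) = X (mU 1) := by
            rw [h, ← hconj (mU 1) (mT (Units.mk0 s hs)), mT_conj_mU, mul_one]
          have a2 : X (mU (-x)) = X (mU (-1)) := by
            rw [h, ← hconj (mU (-1)) (mT (Units.mk0 s hs)), mT_conj_mU]; simp
          rw [a1, a2]; ring
        · have a1 : X (mU (-x)) = X (mU 1) := by
            rw [h, ← hconj (mU 1) (mT (Units.mk0 s hs)), mT_conj_mU, mul_one, neg_neg]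
          have a2 : X (mU x) = X (mU (-1)) := by
            rw [h, ← hconj (mU (-1)) (mT (Units.mk0 s hs)), mT_conj_mU]; simp
          rw [a1, a2]; ring
    have h2 : ∑ x : K, (X (mU x) + X (mU (-x))) = 2 * q * d := by
      rw [Finset.sum_add_distrib, sU, sUn]; ring
    rw [← h2, Finset.sum_congr rfl (fun x _ => h x), Finset.sum_add_distrib, Finset.sum_ite_eq']
    simp only [Finset.sum_const, Finset.card_univ, nsmul_eq_mul, Finset.mem_univ, if_true]
    rw [← hqdef]; ring
  -- E2
  obtain ⟨a, E2⟩ : ∃ a : ℕ, 3 * (a : ℂ) = q + (X (mU 1) + X (mU (-1))) := by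
    let j : Multiplicative (ZMod 3) →* SL(2, K) :=
      jU.comp (AddMonoidHom.toMultiplicative (ZMod.castHom (dvd_refl 3) K).toAddMonoidHom)
    have h := sum_hom ρ j
    refine ⟨_, ((?_ : ((Fintype.card (Multiplicative (ZMod 3)) : ℕ) : ℂ) = 3) ▸ h).symm.trans ?_⟩
    · simp
    · have h3 : ∑ x : Multiplicative (ZMod 3), ρ.character (j x) =
        ∑ x : Fin 3, X (mU (ZMod.castHom (dvd_refl 3) K (x : ZMod 3))) := rfl
      rw [h3, Fin.sum_univ_three]
      have e0 : ZMod.castHom (dvd_refl 3) K (0 : ZMod 3) = 0 := map_zero _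
      have e1 : ZMod.castHom (dvd_refl 3) K (1 : ZMod 3) = 1 := map_one _
      have e2 : ZMod.castHom (dvd_refl 3) K (2 : ZMod 3) = -1 := by
        rw [show (2 : ZMod 3) = -1 from rfl, map_neg, map_one]
      change X (mU (ZMod.castHom (dvd_refl 3) K (0 : ZMod 3))) + X (mU (ZMod.castHom (dvd_refl 3) K (1 : ZMod 3))) +
        X (mU (ZMod.castHom (dvd_refl 3) K (2 : ZMod 3))) = _
      rw [e0, e1, e2, mU_zero, h1]; ring
  -- E3
  have E3 : 2 * d ≤ q := by
    have hV : Module.finrank ℂ V = q := by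
      have : X 1 = Module.finrank ℂ V := ρ.char_one
      rw [h1] at this
      exact_mod_cast this.symm
    have hbot : Representation.invariants (ρ.comp jU) ⊓ Representation.invariants (ρ.comp jL) ≤ ρ.invariants := by
      rintro v ⟨hv1, hv2⟩
      let H : Subgroup SL(2, K) :=
        { carrier := {g | ρ g v = v}
          one_mem' := by simp
          mul_mem' := by
            intro a b ha hb
            simp only [Set.mem_ofPred_eq] at *
            rw [map_mul, Module.End.mul_apply, hb, ha]
          inv_mem' := by
            intro a ha
            simp only [Set.mem_ofPred_eq] at *
            conv_lhs => rw [← ha]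
            simp }
      have hm : ∀ g, g ∈ H := sl_gen (H := H) (fun x => hv1 (Multiplicative.ofAdd x)) (fun x => hv2 (Multiplicative.ofAdd x))
      exact fun g => hm g
    have h3 := Submodule.finrank_mono hbot
    have h4 := Submodule.finrank_sup_add_finrank_inf_eq (Representation.invariants (ρ.comp jU)) (Representation.invariants (ρ.comp jL))
    have h5 := Submodule.finrank_le (Representation.invariants (ρ.comp jU) ⊔ Representation.invariants (ρ.comp jL))
    rw [hdL, ← hd] at h4
    omega
  -- E4
  set c := Module.finrank ℂ (Representation.invariants (ρ.comp jT)) with hc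
  have sT : ∑ a : Kˣ, X (mT a) = (q - 1) * c := by
    have := sum_hom ρ jT
    rw [hcT] at this
    exact this
  have hne : (1 : Kˣ) ≠ -1 := by
    intro h
    apply hns 1
    have := congrArg Units.val h
    simpa using this
  have hT1 : X (mT 1) = q := by rw [← h1]; exact congrArg X (map_one jT)
  have hTn : X (mT (-1)) = q := by rw [← h1, mT_neg_one, hneg]
  have E4' : ∑ a : Kˣ, ∑ x : K, X (mT a * mU x) = 2 * q * d + q * ((q - 1) * c - 2 * q) := by
    have h : ∀ a : Kˣ, ∑ x : K, X (mT a * mU x) = q * X (mT a) +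
        ((if a = 1 then (q : ℂ) * d - q * q else 0) + if a = -1 then (q : ℂ) * d - q * q else 0) := by
      intro a
      by_cases ha : a = 1
      · subst ha
        rw [if_pos rfl, if_neg hne, hT1]
        have : ∀ x : K, mT 1 * mU x = mU x := fun x => by
          rw [show (mT 1 : SL(2, K)) = 1 from map_one jT, one_mul]
        simp only [this, sU]; ring
      by_cases hb : a = -1
      · subst hb
        rw [if_pos rfl, if_neg ha, hTn]
        simp only [mT_neg_one, neg_mul, one_mul, hneg, sU]; ring
      · rw [if_neg ha, if_neg hb]
        have : ∀ x : K, X (mT a * mU x) = X (mT a) := fun x => by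
          obtain ⟨y, hy⟩ := mTU_conj a ha hb x
          rw [← hy, hconj]
        simp [this, hqdef]
    simp only [h]
    rw [Finset.sum_add_distrib, Finset.sum_add_distrib, Finset.sum_ite_eq', Finset.sum_ite_eq',
      ← Finset.mul_sum, sT]
    simp only [Finset.mem_univ, if_true]; ring
  have hF : ∀ H : Subgroup SL(2, K), Finite H := fun H => inferInstance
  have := Fintype.ofFinite (bor : Subgroup SL(2, K))
  obtain ⟨b, hb⟩ : ∃ b : ℕ, ∑ a : Kˣ, ∑ x : K, X (mT a * mU x) = q * (q - 1) * b := by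
    have h := sum_hom ρ (bor : Subgroup SL(2, K)).subtype
    rw [card_bor, hcT] at h
    rw [mul_comm ((q : ℂ) - 1)] at h
    exact ⟨_, (sum_bor X).symm.trans h⟩
  have hmon : ∀ A : Subgroup Kˣ, -1 ∈ A → ∀ _ : Fintype A,
      ∃ n : ℕ, 2 * (Fintype.card A : ℂ) * n = ∑ a : A, X (mT a) + Fintype.card A * X mW := by
    intro A hA _
    have := Fintype.ofFinite (mon A hA)
    have h := sum_hom ρ (mon A hA).subtype
    rw [card_mon] at h
    refine ⟨_, h.symm.trans ((sum_mon A hA X).trans ?_)⟩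
    congr 1
    have : ∀ a : A, X (mT (a : Kˣ) * mW) = X mW := by
      intro a
      obtain ⟨P, h | h⟩ := tr_zero hns (mT (a : Kˣ) * mW) (by
        simp [slmul, mT_00, mT_01, mT_10, mT_11, mW_00, mW_01, mW_10, mW_11])
      · rw [← h, hconj]
      · rw [← hneg, ← h, hconj]
    simp [this]
  obtain ⟨n, E5⟩ := hmon ⊤ (Subgroup.mem_top _) inferInstance
  obtain ⟨e, E6⟩ := hmon (Subgroup.zpowers (-1)) (Subgroup.mem_zpowers _) inferInstance
  have ht : ∑ a : (⊤ : Subgroup Kˣ), X (mT (a : Kˣ)) = ∑ a : Kˣ, X (mT a) :=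
    Fintype.sum_equiv Subgroup.topEquiv.toEquiv _ _ (fun a => rfl)
  have ht2 : Fintype.card (⊤ : Subgroup Kˣ) = Fintype.card Kˣ := Fintype.card_congr Subgroup.topEquiv.toEquiv
  rw [ht, ht2, hcT, sT] at E5
  have hz : ∀ a : Subgroup.zpowers (-1 : Kˣ), X (mT (a : Kˣ)) = q := by
    rintro ⟨a, ha⟩
    obtain ⟨k, rfl⟩ := Subgroup.mem_zpowers_iff.1 ha
    rcases Int.even_or_odd k with hk | hk
    · simp only [hk.neg_one_zpow, hT1]
    · simp only [hk.neg_one_zpow, hTn]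
  have hz2 : Fintype.card (Subgroup.zpowers (-1 : Kˣ)) = 2 := by
    rw [Fintype.card_zpowers]
    exact orderOf_eq_prime (by simp) hne.symm
  rw [Finset.sum_congr rfl (fun a _ => hz a)] at E6
  simp only [Finset.sum_const, Finset.card_univ, nsmul_eq_mul, hz2] at E6
  have hb0 : b ≠ 0 := arith_key q d a b c n e _ (X mW) hq hodd E1 E2 E3 (hb ▸ E4') E5
    (by push_cast at E6; linear_combination E6)
  rw [hb]
  refine mul_ne_zero (mul_ne_zero hq0 ?_) (by exact_mod_cast hb0)
  rw [← hcT]; exact_mod_cast Fintype.card_ne_zero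

lemma three_zero [CharP K 3] : (3 : K) = 0 := by
  have := CharP.cast_eq_zero K 3
  exact_mod_cast this

/-- the twisted Frobenius -/
def frobHom [CharP K 3] : SL(2, K) →* SL(2, K) where
  toFun A := slmk (A.1 0 0 ^ 3) (-(A.1 0 1 ^ 3)) (-(A.1 1 0 ^ 3)) (A.1 1 1 ^ 3) (by
    have h := congrArg (fun x => x ^ 3) (sl_det A)
    simp only [one_pow] at h
    refine Eq.trans ?_ h
    linear_combination (A.1 0 0 * A.1 1 1 * A.1 0 1 * A.1 1 0 * (A.1 0 0 * A.1 1 1 - A.1 0 1 * A.1 1 0)) * three_zero (K := K))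
  map_one' := by
    apply sl_ext <;> simp [slmk_00, slmk_01, slmk_10, slmk_11, sl1_00, sl1_01, sl1_10, sl1_11]
  map_mul' A B := by
    have hp : ∀ x y : K, (x + y) ^ 3 = x ^ 3 + y ^ 3 := fun x y => by
      linear_combination (x ^ 2 * y + x * y ^ 2) * three_zero (K := K)
    apply sl_ext <;> simp only [slmk_00, slmk_01, slmk_10, slmk_11, slmul, hp] <;> ring

lemma frob_inj [CharP K 3] : Function.Injective (frobHom (K := K)) := by
  have hc : ∀ x y : K, x ^ 3 = y ^ 3 → x = y := fun x y h => by
    have : (x - y) ^ 3 = 0 := by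
      linear_combination h - (x ^ 2 * y - x * y ^ 2) * three_zero (K := K)
    exact sub_eq_zero.1 (pow_eq_zero_iff (by norm_num) |>.1 this)
  intro A B h
  have h00 := congrArg (fun g : SL(2, K) => g.1 0 0) h
  have h01 := congrArg (fun g : SL(2, K) => g.1 0 1) h
  have h10 := congrArg (fun g : SL(2, K) => g.1 1 0) h
  have h11 := congrArg (fun g : SL(2, K) => g.1 1 1) h
  exact sl_ext (hc _ _ h00) (hc _ _ (neg_injective h01)) (hc _ _ (neg_injective h10)) (hc _ _ h11)

/-- the twisted Frobenius as automorphism -/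
def frobEquiv [CharP K 3] [Finite K] : SL(2, K) ≃* SL(2, K) :=
  MulEquiv.ofBijective frobHom (Finite.injective_iff_bijective.1 frob_inj)

/-- the twisted Frobenius on PSL -/
def frobPSL [CharP K 3] [Finite K] : MulAut PSL(2, K) :=
  QuotientGroup.congr _ _ frobEquiv
    (Subgroup.characteristic_iff_map_eq.1 (inferInstance : (Subgroup.center SL(2, K)).Characteristic) frobEquiv)

/-- projection -/
def pmk : SL(2, K) →* PSL(2, K) := QuotientGroup.mk' _

lemma pmk_surj : Function.Surjective (pmk (K := K)) := QuotientGroup.mk'_surjective _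

lemma frobPSL_mk [CharP K 3] [Finite K] (A : SL(2, K)) : frobPSL (pmk A) = pmk (frobHom A) := rfl

lemma mem_cen {A : SL(2, K)} : A ∈ Subgroup.center SL(2, K) ↔ A = 1 ∨ A = -1 := by
  rw [Matrix.SpecialLinearGroup.mem_center_iff]
  constructor
  · rintro ⟨r, hr, h⟩
    simp only [Fintype.card_fin] at hr
    rcases mul_self_eq_one_iff.1 ((sq _).symm.trans hr) with rfl | rfl
    · left; apply Subtype.ext; rw [← h]; simp
    · right; apply Subtype.ext; rw [← h]
      ext i j; fin_cases i <;> fin_cases j <;> simp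
  · rintro (rfl | rfl)
    · exact ⟨1, by simp, by simp⟩
    · refine ⟨-1, by simp, ?_⟩
      ext i j; fin_cases i <;> fin_cases j <;> simp

lemma pmk_eq {A B : SL(2, K)} : pmk A = pmk B ↔ A = B ∨ A = -B := by
  have h : pmk A = pmk B ↔ A⁻¹ * B ∈ Subgroup.center SL(2, K) := QuotientGroup.eq
  rw [h, mem_cen, inv_mul_eq_one, inv_mul_eq_iff_eq_mul]
  refine or_congr Iff.rfl ?_
  rw [mul_neg, mul_one, ← neg_eq_iff_eq_neg, eq_comm]

lemma pmk_neg (A : SL(2, K)) : pmk (-A) = pmk A := pmk_eq.2 (Or.inr rfl)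

lemma tr_conj (P M A : SL(2, K)) (h : P * M = A * P) : M.1 0 0 + M.1 1 1 = A.1 0 0 + A.1 1 1 := by
  have h' : A = P * M * P⁻¹ := (mul_inv_eq_of_eq_mul h).symm
  rw [h']
  simp only [slmul, slinv_00, slinv_01, slinv_10, slinv_11]
  linear_combination -(M.1 0 0 + M.1 1 1) * sl_det P

lemma unip_fix [CharP K 3] (hns : ∀ x : K, x ^ 2 ≠ -1) (A P : SL(2, K))
    (ht : A.1 0 0 + A.1 1 1 = 2) (h : P * frobHom A = A * P) : A = 1 := by
  have h00 := congrArg (fun g : SL(2, K) => g.1 0 0) h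
  have h01 := congrArg (fun g : SL(2, K) => g.1 0 1) h
  have h10 := congrArg (fun g : SL(2, K) => g.1 1 0) h
  have h11 := congrArg (fun g : SL(2, K) => g.1 1 1) h
  have f00 : (frobHom A).1 0 0 = A.1 0 0 ^ 3 := rfl
  have f01 : (frobHom A).1 0 1 = -A.1 0 1 ^ 3 := rfl
  have f10 : (frobHom A).1 1 0 = -A.1 1 0 ^ 3 := rfl
  have f11 : (frobHom A).1 1 1 = A.1 1 1 ^ 3 := rfl
  simp only [slmul, f00, f01, f10, f11] at h00 h01 h10 h11
  have hdP := sl_det P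
  have hd := sl_det A
  have hd' : A.1 1 1 = 2 - A.1 0 0 := by linear_combination ht
  simp only [hd'] at hd h01 h10 h11
  have hc : A.1 1 0 = 0 := by
    by_contra hc
    apply hns ((A.1 1 0 * P.1 0 0 - (A.1 0 0 - 1) * P.1 1 0) / A.1 1 0 ^ 2)
    field_simp
    have hQ : A.1 1 0 * (P.1 0 0 * (P.1 1 0 * A.1 0 0 ^ 3 + P.1 1 1 * -A.1 1 0 ^ 3) -
      P.1 1 0 * (P.1 0 0 * A.1 0 0 ^ 3 + P.1 0 1 * -A.1 1 0 ^ 3)) = - A.1 1 0 ^ 4 := by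
      linear_combination - A.1 1 0 ^ 4 * hdP
    rw [h00, h10] at hQ
    linear_combination hQ - P.1 1 0 ^ 2 * hd
  have ha : A.1 0 0 = 1 := by
    rw [hc] at hd
    have : (A.1 0 0 - 1) ^ 2 = 0 := by linear_combination -hd
    exact sub_eq_zero.1 (pow_eq_zero_iff (by norm_num) |>.1 this)
  have hb : A.1 0 1 = 0 := by
    by_contra hb
    apply hns (P.1 1 1 / A.1 0 1)
    field_simp
    apply mul_left_cancel₀ hb
    have hQ : P.1 0 1 * (P.1 1 0 * -A.1 0 1 ^ 3 + P.1 1 1 * (2 - A.1 0 0) ^ 3) -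
      P.1 1 1 * (P.1 0 0 * -A.1 0 1 ^ 3 + P.1 0 1 * (2 - A.1 0 0) ^ 3) = A.1 0 1 ^ 3 := by
      linear_combination A.1 0 1 ^ 3 * hdP
    rw [h01, h11, hc, ha] at hQ
    linear_combination -hQ
  exact sl_ext ha hb hc (by rw [hd', ha, sl1_11]; ring)

lemma frob_fix [CharP K 3] [Finite K] (hns : ∀ x : K, x ^ 2 ≠ -1) (g : PSL(2, K))
    (h : IsConj (frobPSL g) g) : g = 1 ∨ IsConj g (pmk mW) := by
  obtain ⟨A, rfl⟩ := pmk_surj g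
  obtain ⟨c, hc⟩ := isConj_iff.1 h
  obtain ⟨P, rfl⟩ := pmk_surj c
  rw [frobPSL_mk, ← map_mul, ← map_inv, ← map_mul, pmk_eq] at hc
  have hfn : frobHom (-A) = -frobHom A := by
    apply sl_ext
    · change (-A.1 0 0) ^ 3 = -(A.1 0 0 ^ 3); ring
    · change -(-A.1 0 1) ^ 3 = -(-(A.1 0 1 ^ 3)); ring
    · change -(-A.1 1 0) ^ 3 = -(-(A.1 1 0 ^ 3)); ring
    · change (-A.1 1 1) ^ 3 = -(A.1 1 1 ^ 3); ring
  have f00 : (frobHom A).1 0 0 = A.1 0 0 ^ 3 := rfl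
  have f11 : (frobHom A).1 1 1 = A.1 1 1 ^ 3 := rfl
  have h3 := three_zero (K := K)
  by_cases ht : A.1 0 0 + A.1 1 1 = 0
  · right
    obtain ⟨Q, hQ⟩ := tr_zero hns A ht
    rw [← pmk_eq, map_mul, map_mul, map_inv] at hQ
    exact (isConj_iff.2 ⟨_, hQ⟩).symm
  · left
    have hcube : A.1 0 0 ^ 3 + A.1 1 1 ^ 3 = (A.1 0 0 + A.1 1 1) ^ 3 := by
      linear_combination -(A.1 0 0 ^ 2 * A.1 1 1 + A.1 0 0 * A.1 1 1 ^ 2) * h3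
    rcases hc with hc | hc
    · have hc' := mul_inv_eq_iff_eq_mul.1 hc
      have h1 := tr_conj _ _ _ hc'
      rw [f00, f11, hcube] at h1
      have h2 : (A.1 0 0 + A.1 1 1) ^ 2 = 1 := by
        apply mul_left_cancel₀ ht; linear_combination h1
      rcases mul_self_eq_one_iff.1 ((sq _).symm.trans h2) with h2 | h2
      · have := unip_fix hns (-A) P (by rw [slneg, slneg]; linear_combination -h2 - h3) (by
          rw [hfn, mul_neg, neg_mul, hc'])
        rw [← pmk_neg, this, map_one]
      · have := unip_fix hns A P (by linear_combination h2 - h3) hc'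
        rw [this, map_one]
    · have hc' := mul_inv_eq_iff_eq_mul.1 hc
      have h1 := tr_conj _ _ _ hc'
      rw [f00, f11, hcube, slneg, slneg] at h1
      exfalso
      apply hns (A.1 0 0 + A.1 1 1)
      apply mul_left_cancel₀ ht; linear_combination h1

/-- unipotent subgroup of PSL -/
def pU : Subgroup PSL(2, K) := (pmk.comp jU).range

lemma mem_pU {g : PSL(2, K)} : g ∈ pU ↔ ∃ x : K, pmk (mU x) = g := Iff.rfl

lemma bor_conj (A : SL(2, K)) (hA : A ∈ (bor : Subgroup SL(2, K))) (x : K) :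
    A * mU x * A⁻¹ = mU (A.1 0 0 ^ 2 * x) := by
  rw [mem_bor] at hA
  have hd := sl_det A
  rw [hA, mul_zero, sub_zero] at hd
  rw [mul_inv_eq_iff_eq_mul]
  apply sl_ext <;> simp only [slmul, mU_00, mU_01, mU_10, mU_11, hA]
  · ring
  · linear_combination - A.1 0 0 * x * hd
  · ring
  · ring

lemma pU_norm (A : SL(2, K)) : pmk A ∈ Subgroup.normalizer (pU (K := K) : Set PSL(2, K)) ↔ A ∈ (bor : Subgroup SL(2, K)) := by
  constructor
  · intro h
    have h1 := (Subgroup.mem_normalizer_iff.1 h (pmk (mU 1))).1 (mem_pU.2 ⟨1, rfl⟩)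
    obtain ⟨y, hy⟩ := mem_pU.1 h1
    rw [← map_mul, ← map_inv, ← map_mul, pmk_eq] at hy
    have : A.1 1 0 ^ 2 = 0 := by
      rcases hy with hy | hy
      · have h10 := congrArg (fun g : SL(2, K) => g.1 1 0) hy
        simp only [slmul, mU_00, mU_01, mU_10, mU_11, slinv_00, slinv_01, slinv_10, slinv_11] at h10
        linear_combination h10
      · have h10 := congrArg (fun g : SL(2, K) => g.1 1 0) hy
        simp only [slneg, slmul, mU_00, mU_01, mU_10, mU_11, slinv_00, slinv_01, slinv_10, slinv_11] at h10
        linear_combination -h10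
    exact mem_bor.2 (pow_eq_zero_iff (by norm_num) |>.1 this)
  · intro hA
    have key : ∀ A ∈ (bor : Subgroup SL(2, K)), ∀ g ∈ pU (K := K), pmk A * g * (pmk A)⁻¹ ∈ pU (K := K) := by
      rintro A hA g ⟨x, rfl⟩
      refine mem_pU.2 ⟨A.1 0 0 ^ 2 * x.toAdd, ?_⟩
      rw [← bor_conj A hA, map_mul, map_mul, map_inv]; rfl
    rw [Subgroup.mem_normalizer_iff]
    intro g
    refine ⟨key A hA g, fun h => ?_⟩
    have := key A⁻¹ (bor.inv_mem hA) _ h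
    rw [map_inv] at this
    simpa [mul_assoc] using this

lemma bor_pow (A : SL(2, K)) (hA : A.1 1 0 = 0) (n : ℕ) :
    (A ^ n).1 0 0 = A.1 0 0 ^ n := by
  have : (A ^ n).1 0 0 = A.1 0 0 ^ n ∧ (A ^ n).1 1 0 = 0 := by
    induction n with
    | zero => rw [pow_zero, pow_zero]; exact ⟨rfl, rfl⟩
    | succ n ih =>
      rw [pow_succ]
      simp only [slmul, hA, ih.1, ih.2]
      constructor <;> ring
  exact this.1

lemma bor_pel [CharP K 3] (A : SL(2, K)) (hA : A.1 1 0 = 0) (k : ℕ) (h : pmk A ^ (3 ^ k) = 1) :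
    pmk A ∈ pU (K := K) := by
  have : Fact (Nat.Prime 3) := ⟨by norm_num⟩
  have hd := sl_det A
  rw [hA, mul_zero, sub_zero] at hd
  rw [← map_pow, ← map_one pmk, pmk_eq] at h
  have ha : A.1 0 0 = 1 ∨ A.1 0 0 = -1 := by
    rcases h with h | h
    · left
      have h00 := congrArg (fun g : SL(2, K) => g.1 0 0) h
      simp only [bor_pow A hA, sl1_00] at h00
      apply iterateFrobenius_inj K 3 k
      rw [iterateFrobenius_def, iterateFrobenius_def, h00, one_pow]
    · right
      have h00 := congrArg (fun g : SL(2, K) => g.1 0 0) h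
      simp only [bor_pow A hA, slneg, sl1_00] at h00
      apply iterateFrobenius_inj K 3 k
      rw [iterateFrobenius_def, iterateFrobenius_def, h00, Odd.neg_one_pow (Odd.pow (by decide))]
  rcases ha with ha | ha
  · refine mem_pU.2 ⟨A.1 0 1, congrArg pmk ?_⟩
    apply sl_ext <;> simp only [mU_00, mU_01, mU_10, mU_11, ha, hA]
    rw [ha] at hd; linear_combination -hd
  · refine mem_pU.2 ⟨-A.1 0 1, pmk_eq.2 (Or.inr ?_)⟩
    apply sl_ext <;> simp only [slneg, mU_00, mU_01, mU_10, mU_11, ha, hA]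
    · ring
    · ring
    · rw [ha] at hd; linear_combination -hd

lemma pU_pgroup [CharP K 3] : IsPGroup 3 (pU (K := K)) := by
  rintro ⟨g, x, rfl⟩
  refine ⟨1, Subtype.ext ?_⟩
  change (pmk.comp jU x) ^ (3 ^ 1) = 1
  rw [← map_pow]
  have : x ^ (3 ^ 1) = 1 := by
    apply Multiplicative.toAdd.injective
    change (3 ^ 1) • x.toAdd = 0
    rw [nsmul_eq_mul]; push_cast
    rw [three_zero, zero_mul]
  rw [this, map_one]

lemma pU_max [CharP K 3] [Finite K] (Q : Subgroup PSL(2, K)) (hQ : IsPGroup 3 Q) (hle : pU ≤ Q) :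
    Q = pU := by
  have : Fact (Nat.Prime 3) := ⟨by norm_num⟩
  have : Finite PSL(2, K) := Finite.of_surjective _ pmk_surj
  have : Group.IsNilpotent Q := hQ.isNilpotent
  by_contra hne
  have hlt : (pU (K := K)).subgroupOf Q < ⊤ := by
    rw [lt_top_iff_ne_top, Ne, Subgroup.subgroupOf_eq_top]
    exact fun h => hne (le_antisymm h hle)
  have h2 := Group.normalizerCondition_of_isNilpotent (G := Q) _ hlt
  obtain ⟨x, hx, hx'⟩ := SetLike.exists_of_lt h2
  apply hx'
  rw [Subgroup.mem_subgroupOf]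
  have hxn : (x : PSL(2, K)) ∈ Subgroup.normalizer (pU (K := K) : Set PSL(2, K)) := by
    rw [Subgroup.mem_normalizer_iff]
    intro g
    constructor
    · intro hg
      have := (Subgroup.mem_normalizer_iff.1 hx ⟨g, hle hg⟩).1 hg
      exact this
    · intro hg
      have hgQ : g ∈ Q := by
        have := Q.mul_mem (Q.mul_mem (Q.inv_mem x.2) (hle hg)) x.2
        simpa [mul_assoc] using this
      exact (Subgroup.mem_normalizer_iff.1 hx ⟨g, hgQ⟩).2 hg
  obtain ⟨A, hA⟩ := pmk_surj (x : PSL(2, K))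
  rw [← hA] at hxn ⊢
  have hb := mem_bor.1 ((pU_norm A).1 hxn)
  obtain ⟨k, hk⟩ := hQ x
  refine bor_pel A hb k ?_
  rw [hA]
  exact congrArg Subtype.val hk

/-- the standard Sylow -/
def syl0 [CharP K 3] [Finite K] : Sylow 3 PSL(2, K) where
  toSubgroup := pU
  isPGroup' := pU_pgroup
  is_maximal' := fun {Q} hQ hle => pU_max Q hQ hle

lemma syl0_stab [CharP K 3] [Finite K] (A : SL(2, K)) :
    pmk A • (syl0 : Sylow 3 PSL(2, K)) = syl0 ↔ A ∈ (bor : Subgroup SL(2, K)) := by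
  rw [Sylow.smul_eq_iff_mem_normalizer, ← pU_norm]
  rfl

lemma syl_trans [CharP K 3] [Finite K] (x : Sylow 3 PSL(2, K)) : ∃ A : SL(2, K), pmk A • syl0 = x := by
  have : Fact (Nat.Prime 3) := ⟨by norm_num⟩
  have : Finite PSL(2, K) := Finite.of_surjective _ pmk_surj
  obtain ⟨g, hg⟩ := MulAction.exists_smul_eq PSL(2, K) (syl0 : Sylow 3 PSL(2, K)) x
  obtain ⟨A, rfl⟩ := pmk_surj g
  exact ⟨A, hg⟩

/-- the opposite Sylow -/
def syl1 [CharP K 3] [Finite K] : Sylow 3 PSL(2, K) := pmk (mW : SL(2, K)) • syl0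

lemma bruhat (A : SL(2, K)) (hA : A.1 1 0 ≠ 0) :
    (mU (A.1 0 0 / A.1 1 0) * mW)⁻¹ * A ∈ (bor : Subgroup SL(2, K)) := by
  rw [mem_bor, mul_inv_rev]
  simp only [slmul, mU_00, mU_01, mU_10, mU_11, slinv_00, slinv_01, slinv_10, slinv_11, mW_00, mW_01, mW_10, mW_11]
  field_simp
  ring

lemma syl_opp [CharP K 3] [Finite K] (x : Sylow 3 PSL(2, K)) (hx : x ≠ syl0) :
    ∃ t : K, pmk (mU t) • syl1 = x := by
  obtain ⟨A, rfl⟩ := syl_trans x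
  rw [Ne, syl0_stab, mem_bor] at hx
  refine ⟨A.1 0 0 / A.1 1 0, ?_⟩
  have := (syl0_stab _).2 (bruhat A hx)
  rw [map_mul, map_inv, mul_smul, inv_smul_eq_iff, map_mul, mul_smul] at this
  exact this.symm

lemma mU_bor (t : K) : mU t ∈ (bor : Subgroup SL(2, K)) := rfl

lemma syl1_ne [CharP K 3] [Finite K] : (syl1 : Sylow 3 PSL(2, K)) ≠ syl0 := by
  rw [syl1, Ne, syl0_stab, mem_bor, mW_10]; simp

lemma syl_two [CharP K 3] [Finite K] (x y : Sylow 3 PSL(2, K)) (hxy : x ≠ y) :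
    ∃ g : PSL(2, K), g • syl0 = x ∧ g • syl1 = y := by
  obtain ⟨A, rfl⟩ := syl_trans x
  have : (pmk A)⁻¹ • y ≠ syl0 := by
    intro h; apply hxy; rw [inv_smul_eq_iff] at h; exact h.symm
  obtain ⟨t, ht⟩ := syl_opp _ this
  refine ⟨pmk A * pmk (mU t), ?_, ?_⟩
  · rw [mul_smul, (syl0_stab _).2 (mU_bor t)]
  · rw [mul_smul, ht, smul_inv_smul]

lemma syl_card [CharP K 3] [Finite K] : Nat.card (Sylow 3 PSL(2, K)) = Nat.card K + 1 := by
  have h : Function.Bijective (fun o : Option K => o.elim (syl0 : Sylow 3 PSL(2, K)) (fun t => pmk (mU t) • syl1)) := by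
    have h1 : ∀ t : K, pmk (mU t) • (syl1 : Sylow 3 PSL(2, K)) ≠ syl0 := by
      intro t h
      rw [← eq_inv_smul_iff, ← map_inv, (syl0_stab _).2 (bor.inv_mem (mU_bor t))] at h
      exact syl1_ne h
    constructor
    · rintro (_ | t) (_ | s) h
      · rfl
      · exact absurd h.symm (h1 s)
      · exact absurd h (h1 t)
      · have h : pmk (mU t) • syl1 = pmk (mU s) • (syl1 : Sylow 3 PSL(2, K)) := h
        rw [syl1, ← mul_smul, ← mul_smul, ← inv_smul_eq_iff, ← mul_smul, ← map_mul, ← map_mul, ← map_inv,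
          ← map_mul, syl0_stab, mem_bor, mul_inv_rev] at h
        simp only [slmul, mU_00, mU_01, mU_10, mU_11, slinv_00, slinv_01, slinv_10, slinv_11, mW_00, mW_01, mW_10, mW_11] at h
        have : t = s := by linear_combination -h
        rw [this]
    · intro x
      by_cases hx : x = syl0
      · exact ⟨none, hx.symm⟩
      · obtain ⟨t, ht⟩ := syl_opp x hx
        exact ⟨some t, ht⟩
  rw [← Nat.card_congr (Equiv.ofBijective _ h), Finite.card_option]

open scoped Classical in
lemma sum_fixpts [Fintype K] [CharP K 3] [Fintype (Sylow 3 PSL(2, K))] [Fintype SL(2, K)]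
    [Fintype (bor : Subgroup SL(2, K))] (X : SL(2, K) → ℂ)
    (hX : ∀ g x, X (x * g * x⁻¹) = X g) :
    ∑ A : SL(2, K), X A * ((Finset.univ.filter (fun x : Sylow 3 PSL(2, K) => pmk A • x = x)).card : ℂ) =
      Fintype.card (Sylow 3 PSL(2, K)) * ∑ g : (bor : Subgroup SL(2, K)), X g := by
  have h1 : ∀ A : SL(2, K), X A * ((Finset.univ.filter (fun x : Sylow 3 PSL(2, K) => pmk A • x = x)).card : ℂ) =
      ∑ x : Sylow 3 PSL(2, K), if pmk A • x = x then X A else 0 := by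
    intro A
    rw [← Finset.sum_filter, Finset.sum_const, nsmul_eq_mul, mul_comm]
  simp only [h1]
  rw [Finset.sum_comm]
  have h2 : ∀ x : Sylow 3 PSL(2, K), (∑ A : SL(2, K), if pmk A • x = x then X A else 0) =
      ∑ g : (bor : Subgroup SL(2, K)), X g := by
    intro x
    obtain ⟨B, rfl⟩ := syl_trans x
    have h3 : ∑ g : (bor : Subgroup SL(2, K)), X g = ∑ A : SL(2, K), if A ∈ (bor : Subgroup SL(2, K)) then X A else 0 := by
      rw [← Finset.sum_filter]
      exact (Finset.sum_subtype _ (fun x => by simp) X).symm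
    rw [h3]
    symm
    refine Fintype.sum_equiv (MulAut.conj B).toEquiv _ _ (fun A => ?_)
    have : (pmk ((MulAut.conj B).toEquiv A) • pmk B • (syl0 : Sylow 3 PSL(2, K)) = pmk B • syl0) ↔ A ∈ (bor : Subgroup SL(2, K)) := by
      rw [← syl0_stab]
      change pmk (B * A * B⁻¹) • pmk B • (syl0 : Sylow 3 PSL(2, K)) = pmk B • syl0 ↔ _
      rw [← mul_smul, ← map_mul, inv_mul_cancel_right, map_mul, mul_smul, smul_left_cancel_iff]
    simp only [this]
    refine if_congr Iff.rfl ?_ rfl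
    exact (hX A B).symm
  simp only [h2, Finset.sum_const, Finset.card_univ, nsmul_eq_mul]

open scoped Classical in
lemma sum_surj {G H : Type} [Group G] [Group H] [Fintype G] [Fintype H] (π : G →* H)
    (hπ : Function.Surjective π) (F : H → ℂ) (h0 : ∑ h, F h = 0) : ∑ g, F (π g) = 0 := by
  rw [← Finset.sum_fiberwise (s := Finset.univ) (g := π)]
  have : ∀ h : H, ∑ g ∈ Finset.univ.filter (fun g => π g = h), F (π g) =
      ((Finset.univ.filter (fun g => π g = 1)).card : ℂ) * F h := by
    intro h
    rw [MonoidHom.card_fiber_eq_of_mem_range π ⟨1, map_one π⟩ (hπ h)]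
    rw [← nsmul_eq_mul, ← Finset.sum_const]
    refine Finset.sum_congr rfl fun g hg => ?_
    rw [(Finset.mem_filter.1 hg).2]
  simp only [this]
  rw [← Finset.mul_sum, h0, mul_zero]

lemma ext_inv {S : Type} [Group S] [Finite (MulAut S)] {χ : S → ℂ} (h : ExtendsToAut S χ) (τ : MulAut S) (s : S) :
    χ (τ s) = χ s := by
  have := Fintype.ofFinite (MulAut S)
  obtain ⟨ψ, hψ, hr⟩ := h
  rw [← hr, ← hr]
  rw [← irr_conj hψ (MulAut.conj s) τ]
  congr 1
  ext x
  simp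

open scoped Classical in
lemma main_aux [Fintype K] [CharP K 3] (hq : 3 < Fintype.card K) (hodd : Fintype.card K % 2 = 1)
    (hns : ∀ x : K, x ^ 2 ≠ -1) (χ : PSL(2, K) → ℂ) (hχ : IsIrrChar PSL(2, K) χ) :
    (χ ≠ (fun _ => 1) ∧ ExtendsToAut PSL(2, K) χ) ↔ χ 1 = (Fintype.card K : ℂ) := by
  have : Finite PSL(2, K) := Finite.of_surjective _ pmk_surj
  have := Fintype.ofFinite PSL(2, K)
  have : Finite (MulAut PSL(2, K)) := Finite.of_injective (fun τ : MulAut PSL(2, K) => (τ : PSL(2, K) → PSL(2, K))) DFunLike.coe_injective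
  have := Fintype.ofFinite (MulAut PSL(2, K))
  have : Finite (Sylow 3 PSL(2, K)) := inferInstance
  have := Fintype.ofFinite (Sylow 3 PSL(2, K))
  have := Fintype.ofFinite (bor : Subgroup SL(2, K))
  have := Fintype.ofFinite SL(2, K)
  let St : PSL(2, K) → ℂ := fun g => ((Finset.univ.filter (fun x : Sylow 3 PSL(2, K) => g • x = x)).card : ℂ) - 1
  have hSt : IsIrrChar PSL(2, K) St := st_irr PSL(2, K) (Sylow 3 PSL(2, K)) syl0 syl1 syl1_ne
    (fun x => (syl_trans x).imp' pmk (fun A h => h)) syl_two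
  have hSt1 : St 1 = Fintype.card K := by
    have := syl_card (K := K)
    rw [Nat.card_eq_fintype_card, Nat.card_eq_fintype_card] at this
    simp only [St, one_smul, Finset.filter_true, Finset.card_univ, this]
    push_cast; ring
  have hStE : ExtendsToAut PSL(2, K) St := by
    refine ⟨_, st_irr (MulAut PSL(2, K)) (Sylow 3 PSL(2, K)) syl0 syl1 syl1_ne ?_ ?_, fun s => rfl⟩
    · intro x
      obtain ⟨A, hA⟩ := syl_trans x
      exact ⟨MulAut.conj (pmk A), hA⟩
    · intro x y hxy
      obtain ⟨g, h1, h2⟩ := syl_two x y hxy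
      exact ⟨MulAut.conj g, h1, h2⟩
  have hStne : St ≠ fun _ => 1 := by
    intro h
    have h1 : St 1 = 1 := congrFun h 1
    rw [hSt1] at h1
    have : Fintype.card K = 1 := by exact_mod_cast h1
    omega
  constructor
  · rintro ⟨hne, hE⟩
    by_contra hc
    refine brauer_two frobPSL (pmk mW) (fun g h => frob_fix hns g h) (fun _ => 1) St χ irr_one hSt hχ
      (fun g => rfl) (fun g => ext_inv hStE _ g) (fun g => ext_inv hE _ g) hStne.symm hne.symm ?_
    rintro rfl
    exact hc hSt1
  · intro h1
    have hne : χ ≠ fun _ => 1 := by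
      intro h
      rw [h] at h1
      beta_reduce at h1
      have : 1 = Fintype.card K := by exact_mod_cast h1
      omega
    refine ⟨hne, ?_⟩
    suffices h : χ = St by rw [h]; exact hStE
    by_contra hcSt
    obtain ⟨V, _, _, _, ρ, hρ⟩ := irr_rep hχ
    have hs0 : ∑ g : PSL(2, K), χ g = 0 := by
      have := irr_orth hχ irr_one hne
      simpa using this
    have hinv0 : Module.finrank ℂ ρ.invariants = 0 := by
      have h := sum_hom ρ (MonoidHom.id PSL(2, K))
      simp only [MonoidHom.id_apply, hρ] at h
      rw [hs0] at h
      have h' := (mul_eq_zero.1 h.symm).resolve_left (by exact_mod_cast Fintype.card_ne_zero)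
      exact_mod_cast h'
    let ρ' : Representation ℂ SL(2, K) V := ρ.comp pmk
    have hc' : ∀ g, ρ'.character g = χ (pmk g) := fun g => hρ (pmk g)
    have hinv : Module.finrank ℂ ρ'.invariants = 0 := by
      have hle : ρ'.invariants ≤ ρ.invariants := by
        intro v hv g
        obtain ⟨A, rfl⟩ := pmk_surj g
        exact hv A
      have := Submodule.finrank_mono hle
      omega
    have key := borel_ne hq hodd hns ρ' (fun g => by rw [hc', hc', pmk_neg])
      (by rw [hc', map_one, h1]) hinv
    apply key
    rw [← sum_bor]
    have hsum := sum_fixpts (K := K) ρ'.character (fun g x => ρ'.char_conj g x)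
    have horth := irr_orth hχ hSt hcSt
    have hinvf : ∀ g : PSL(2, K), St g⁻¹ = St g := by
      intro g
      have : ∀ x : Sylow 3 PSL(2, K), g⁻¹ • x = x ↔ g • x = x := fun x => by
        rw [inv_smul_eq_iff, eq_comm]
      simp only [St, this]
    have hz : ∑ g : PSL(2, K), χ g * ((Finset.univ.filter (fun x : Sylow 3 PSL(2, K) => g • x = x)).card : ℂ) = 0 := by
      have h2 : ∀ g : PSL(2, K), χ g * ((Finset.univ.filter (fun x : Sylow 3 PSL(2, K) => g • x = x)).card : ℂ) = χ g * St g⁻¹ + χ g := by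
        intro g; rw [hinvf]; simp only [St]; ring
      simp only [h2]
      rw [Finset.sum_add_distrib, horth, hs0, add_zero]
    have hz2 := sum_surj pmk pmk_surj _ hz
    simp only [hc'] at hsum ⊢
    rw [hz2] at hsum
    exact (mul_eq_zero.1 hsum.symm).resolve_left (by
      rw [← Nat.card_eq_fintype_card, syl_card]; exact Nat.cast_ne_zero.2 (Nat.succ_ne_zero _))

end helperA

/-- For odd `f ≥ 3` and `S = PSL(2, 3^f)`, the only non-principal irreducible character of
`S` having an extension to `Aut S` is the Steinberg character, i.e. the unique irreducible
character of degree `3^f`: a given irreducible character `χ` of `S` is non-principal with an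
extension to `Aut S` if and only if `χ(1) = 3^f`. -/
theorem psl_only_steinberg_extends (f : ℕ) (hfodd : Odd f) (hf3 : 3 ≤ f)
    (χ : PSL(2, GaloisField 3 f) → ℂ)
    (hχ : IsIrrChar (PSL(2, GaloisField 3 f)) χ) :
    (χ ≠ (fun _ => 1) ∧ ExtendsToAut (PSL(2, GaloisField 3 f)) χ) ↔ χ 1 = (3 : ℂ) ^ f := by

  have h3 : Fact (Nat.Prime 3) := ⟨Nat.prime_three⟩
  have := Fintype.ofFinite (GaloisField 3 f)
  have hcard : Fintype.card (GaloisField 3 f) = 3 ^ f := by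
    rw [← Nat.card_eq_fintype_card]
    exact GaloisField.card 3 f (by omega)
  have hmod : 3 ^ f % 4 = 3 := by
    obtain ⟨k, rfl⟩ := hfodd
    rw [pow_succ, pow_mul, Nat.mul_mod, Nat.pow_mod]
    norm_num
  have hbig : 3 < 3 ^ f := by
    calc 3 < 3 ^ 3 := by norm_num
      _ ≤ 3 ^ f := Nat.pow_le_pow_right (by norm_num) hf3
  have hns : ∀ x : GaloisField 3 f, x ^ 2 ≠ -1 := by
    intro x hx
    have : IsSquare (-1 : GaloisField 3 f) := ⟨x, by rw [← hx, sq]⟩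
    rw [FiniteField.isSquare_neg_one_iff, hcard] at this
    exact this hmod
  have := main_aux (K := GaloisField 3 f) (by rw [hcard]; exact hbig) (by rw [hcard]; omega) hns χ hχ
  rw [hcard] at this
  push_cast at this
  exact this
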